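/- Let S be a connected quasi-hereditary algebra with a simple-preserving duality whose partial order is minimal for the quasi-hereditary structure. If S satisfies property A (μ < λ implies gfd(L(μ)) ≤ gfd(L(λ))) and property C (wfd(∇(λ)) = gfd(S) − inj(∇(λ)) for all λ), then S satisfies property E (μ < λ implies inj(∇(μ)) ≥ inj(∇(λ))). -/

import Mathlib

/-!
Common definitions for formalizing "On the global and ∇-filtration dimensions of
quasi-hereditary algebras" by Erdmann and Parker.

We work with a finite-dimensional algebra `S` over a field `k`; since `S` is
finite dimensional over `k`, the finite-dimensional `S`-modules are exactly the
finitely generated ones, so we express finite-dimensionality of a module `M` as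
`Module.Finite S M`.
-/

open CategoryTheory

namespace QHPaper

variable (S : Type) [Ring S]

/-- The subquotient `B ⧸ A` associated to two submodules `A B` of `M`. -/
abbrev subquot {M : ModuleCat.{0} S} (A B : Submodule S ↥M) : Type :=
  ↥B ⧸ (Submodule.comap B.subtype A)

/-- A filtration `⊥ = f 0 ≤ f 1 ≤ ⋯ ≤ f n = ⊤` of `M` whose `i`-th section
`f (i+1) / f i` is isomorphic to the prescribed module `D i`. -/
def HasFiltrationWithSections (M : ModuleCat.{0} S) (n : ℕ)
    (f : Fin (n + 1) → Submodule S ↥M) (D : Fin n → ModuleCat.{0} S) : Prop :=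
  Monotone f ∧ f 0 = ⊥ ∧ f (Fin.last n) = ⊤ ∧
    ∀ i : Fin n, Nonempty ((subquot S (f i.castSucc) (f i.succ)) ≃ₗ[S] ↥(D i))

/-- `L` occurs as a (simple) subquotient of `M`; for `L` simple this says that `L`
is a composition factor of `M`. -/
def IsCompFactor (L M : ModuleCat.{0} S) : Prop :=
  ∃ (A B : Submodule S ↥M), A ≤ B ∧ Nonempty ((subquot S A B) ≃ₗ[S] ↥L)

/-- `L` occurs with multiplicity `m` among the sections of a composition series of `M`. -/
def CompFactorMult (L M : ModuleCat.{0} S) (m : ℕ) : Prop :=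
  ∃ (n : ℕ) (f : Fin (n + 1) → Submodule S ↥M),
    Monotone f ∧ f 0 = ⊥ ∧ f (Fin.last n) = ⊤ ∧
    (∀ i : Fin n, IsSimpleModule S (subquot S (f i.castSucc) (f i.succ))) ∧
    Nat.card {i : Fin n // Nonempty ((subquot S (f i.castSucc) (f i.succ)) ≃ₗ[S] ↥L)} = m

/-- `P` is a projective cover of `M`: `P` is projective and there is a surjection
`P → M` whose kernel is superfluous in `P`. -/
def IsProjCover (P M : ModuleCat.{0} S) : Prop :=
  Module.Projective S ↥P ∧ ∃ π : ↥P →ₗ[S] ↥M, Function.Surjective π ∧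
    ∀ N : Submodule S ↥P, N ⊔ LinearMap.ker π = ⊤ → N = ⊤

/-- `I` is an injective hull of `M`: `I` is injective and there is an injection
`M → I` with essential image. -/
def IsInjHull (I M : ModuleCat.{0} S) : Prop :=
  Module.Injective S ↥I ∧ ∃ ι : ↥M →ₗ[S] ↥I, Function.Injective ι ∧
    ∀ N : Submodule S ↥I, N ⊓ LinearMap.range ι = ⊥ → N = ⊥

/-- The data of a quasi-hereditary algebra structure on `S` with weight poset `Λ`:
a full set `L` of pairwise non-isomorphic simple modules, their projective covers `P`
and injective hulls `I`, the standard modules `std` (largest quotient of `P lam` with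
all composition factors `L mu`, `mu ≤ lam`), the costandard modules `costd`
(largest submodule of `I lam` with all composition factors `L mu`, `mu ≤ lam`),
such that `L lam` occurs exactly once in `std lam` and `P lam` is filtered by
standard modules `std mu` with `mu ≥ lam`, with `std lam` occurring exactly once. -/
structure QHData (Λ : Type) [Fintype Λ] [PartialOrder Λ] where
  L : Λ → ModuleCat.{0} S
  P : Λ → ModuleCat.{0} S
  I : Λ → ModuleCat.{0} S
  std : Λ → ModuleCat.{0} S
  costd : Λ → ModuleCat.{0} S
  finiteL : ∀ lam, Module.Finite S ↥(L lam)
  simpleL : ∀ lam, IsSimpleModule S ↥(L lam)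
  nonisoL : ∀ lam mu, lam ≠ mu → IsEmpty (↥(L lam) ≃ₗ[S] ↥(L mu))
  fullL : ∀ M : ModuleCat.{0} S, IsSimpleModule S ↥M → ∃ lam, Nonempty (↥M ≃ₗ[S] ↥(L lam))
  projCover : ∀ lam, IsProjCover S (P lam) (L lam)
  injHull : ∀ lam, IsInjHull S (I lam) (L lam)
  stdSpec : ∀ lam, ∃ K : Submodule S ↥(P lam),
    Nonempty (↥(std lam) ≃ₗ[S] (↥(P lam) ⧸ K)) ∧
    (∀ mu, IsCompFactor S (L mu) (ModuleCat.of S (↥(P lam) ⧸ K)) → mu ≤ lam) ∧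
    ∀ K' : Submodule S ↥(P lam),
      (∀ mu, IsCompFactor S (L mu) (ModuleCat.of S (↥(P lam) ⧸ K')) → mu ≤ lam) → K ≤ K'
  costdSpec : ∀ lam, ∃ V : Submodule S ↥(I lam),
    Nonempty (↥(costd lam) ≃ₗ[S] ↥V) ∧
    (∀ mu, IsCompFactor S (L mu) (ModuleCat.of S ↥V) → mu ≤ lam) ∧
    ∀ V' : Submodule S ↥(I lam),
      (∀ mu, IsCompFactor S (L mu) (ModuleCat.of S ↥V') → mu ≤ lam) → V' ≤ V
  multOne : ∀ lam, CompFactorMult S (L lam) (std lam) 1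
  projFilt : ∀ lam, ∃ (n : ℕ) (f : Fin (n + 1) → Submodule S ↥(P lam)) (g : Fin n → Λ),
    HasFiltrationWithSections S (P lam) n f (fun i => std (g i)) ∧
    (∀ i, lam ≤ g i) ∧ Nat.card {i : Fin n // g i = lam} = 1

variable {Λ : Type} [Fintype Λ] [PartialOrder Λ]

/-- `M` has a filtration with costandard sections, i.e. `M ∈ F(∇)`. -/
def InCostdFilt (Q : QHData S Λ) (M : ModuleCat.{0} S) : Prop :=
  ∃ (n : ℕ) (f : Fin (n + 1) → Submodule S ↥M) (g : Fin n → Λ),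
    HasFiltrationWithSections S M n f (fun i => Q.costd (g i))

/-- `M` has a filtration with standard sections, i.e. `M ∈ F(Δ)`. -/
def InStdFilt (Q : QHData S Λ) (M : ModuleCat.{0} S) : Prop :=
  ∃ (n : ℕ) (f : Fin (n + 1) → Submodule S ↥M) (g : Fin n → Λ),
    HasFiltrationWithSections S M n f (fun i => Q.std (g i))

/-- `0 → N 0 → N 1 → ⋯ → N (n+1) → 0` is exact. -/
def IsExactSeq (n : ℕ) (N : Fin (n + 2) → ModuleCat.{0} S)
    (f : ∀ i : Fin (n + 1), ↥(N i.castSucc) →ₗ[S] ↥(N i.succ)) : Prop :=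
  Function.Injective (f 0) ∧ Function.Surjective (f (Fin.last n)) ∧
    ∀ i : Fin n, LinearMap.range (f i.castSucc) = LinearMap.ker (f i.succ)

/-- `M` has a ∇-resolution (co-resolution by modules in `F(∇)`) of length `d`:
`0 → M → M₀ → ⋯ → M_d → 0` with each `Mᵢ ∈ F(∇)`. -/
def GfdLE (Q : QHData S Λ) (M : ModuleCat.{0} S) (d : ℕ) : Prop :=
  ∃ (N : Fin (d + 2) → ModuleCat.{0} S)
    (f : ∀ i : Fin (d + 1), ↥(N i.castSucc) →ₗ[S] ↥(N i.succ)),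
    IsExactSeq S d N f ∧ N 0 = M ∧ ∀ i : Fin (d + 1), InCostdFilt S Q (N i.succ)

/-- The ∇-filtration dimension (good filtration dimension) of a module. -/
noncomputable def gfd (Q : QHData S Λ) (M : ModuleCat.{0} S) : ℕ :=
  sInf {d | GfdLE S Q M d}

/-- `M` has a resolution `0 → M_d → ⋯ → M₀ → M → 0` with each `Mᵢ ∈ F(Δ)`. -/
def WfdLE (Q : QHData S Λ) (M : ModuleCat.{0} S) (d : ℕ) : Prop :=
  ∃ (N : Fin (d + 2) → ModuleCat.{0} S)
    (f : ∀ i : Fin (d + 1), ↥(N i.castSucc) →ₗ[S] ↥(N i.succ)),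
    IsExactSeq S d N f ∧ N (Fin.last (d + 1)) = M ∧
    ∀ i : Fin (d + 1), InStdFilt S Q (N i.castSucc)

/-- The Δ-filtration dimension of a module. -/
noncomputable def wfd (Q : QHData S Λ) (M : ModuleCat.{0} S) : ℕ :=
  sInf {d | WfdLE S Q M d}

/-- `M` has a projective resolution of length `d`. -/
def ProjdimLE (M : ModuleCat.{0} S) (d : ℕ) : Prop :=
  ∃ (N : Fin (d + 2) → ModuleCat.{0} S)
    (f : ∀ i : Fin (d + 1), ↥(N i.castSucc) →ₗ[S] ↥(N i.succ)),
    IsExactSeq S d N f ∧ N (Fin.last (d + 1)) = M ∧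
    ∀ i : Fin (d + 1), Module.Projective S ↥(N i.castSucc)

/-- The projective dimension of a module. -/
noncomputable def projdim (M : ModuleCat.{0} S) : ℕ :=
  sInf {d | ProjdimLE S M d}

/-- `M` has an injective resolution of length `d`. -/
def InjdimLE (M : ModuleCat.{0} S) (d : ℕ) : Prop :=
  ∃ (N : Fin (d + 2) → ModuleCat.{0} S)
    (f : ∀ i : Fin (d + 1), ↥(N i.castSucc) →ₗ[S] ↥(N i.succ)),
    IsExactSeq S d N f ∧ N 0 = M ∧
    ∀ i : Fin (d + 1), Module.Injective S ↥(N i.succ)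

/-- The injective dimension of a module. -/
noncomputable def injdim (M : ModuleCat.{0} S) : ℕ :=
  sInf {d | InjdimLE S M d}

/-- `gfd(S)`: the supremum of the ∇-filtration dimensions of all
finite-dimensional `S`-modules. -/
noncomputable def gfdAlg (Q : QHData S Λ) : ℕ :=
  sSup {d | ∃ M : ModuleCat.{0} S, Module.Finite S ↥M ∧ gfd S Q M = d}

/-- `wfd(S)`: the supremum of the Δ-filtration dimensions of all
finite-dimensional `S`-modules. -/
noncomputable def wfdAlg (Q : QHData S Λ) : ℕ :=
  sSup {d | ∃ M : ModuleCat.{0} S, Module.Finite S ↥M ∧ wfd S Q M = d}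

/-- The global dimension of `S`: the supremum of the projective dimensions of all
finite-dimensional `S`-modules. -/
noncomputable def globdim : ℕ :=
  sSup {d | ∃ M : ModuleCat.{0} S, Module.Finite S ↥M ∧ projdim S M = d}

/-- `Ext^n_S(A, B) ≠ 0`. -/
noncomputable def extNe (A B : ModuleCat.{0} S) (n : ℕ) : Prop :=
  Nontrivial ↥(((Ext ℤ (ModuleCat.{0} S) n).obj (Opposite.op A)).obj B)

/-- A simple-preserving duality on `S`: a contravariant, exact, fully faithful,
additive self-functor `D` on the category of finite-dimensional `S`-modules with
`D (D M) ≅ M` and `D (L lam) ≅ L lam` for all `lam`. -/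
structure Duality (Q : QHData S Λ) where
  D : ModuleCat.{0} S → ModuleCat.{0} S
  Dmap : ∀ {A B : ModuleCat.{0} S}, (↥A →ₗ[S] ↥B) → (↥(D B) →ₗ[S] ↥(D A))
  finD : ∀ M : ModuleCat.{0} S, Module.Finite S ↥M → Module.Finite S ↥(D M)
  Did : ∀ A : ModuleCat.{0} S, Module.Finite S ↥A →
    Dmap (LinearMap.id : ↥A →ₗ[S] ↥A) = LinearMap.id
  Dcomp : ∀ {A B C : ModuleCat.{0} S}, Module.Finite S ↥A → Module.Finite S ↥B →
    Module.Finite S ↥C → ∀ (f : ↥A →ₗ[S] ↥B) (g : ↥B →ₗ[S] ↥C),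
      Dmap (g ∘ₗ f) = Dmap f ∘ₗ Dmap g
  Dadd : ∀ {A B : ModuleCat.{0} S}, Module.Finite S ↥A → Module.Finite S ↥B →
    ∀ (f g : ↥A →ₗ[S] ↥B), Dmap (f + g) = Dmap f + Dmap g
  Dfull : ∀ {A B : ModuleCat.{0} S}, Module.Finite S ↥A → Module.Finite S ↥B →
    Function.Bijective (fun f : ↥A →ₗ[S] ↥B => Dmap f)
  Dexact : ∀ {A B C : ModuleCat.{0} S}, Module.Finite S ↥A → Module.Finite S ↥B →
    Module.Finite S ↥C → ∀ (f : ↥A →ₗ[S] ↥B) (g : ↥B →ₗ[S] ↥C),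
      Function.Injective f → Function.Surjective g →
      LinearMap.range f = LinearMap.ker g →
      Function.Injective (Dmap g) ∧ Function.Surjective (Dmap f) ∧
        LinearMap.range (Dmap g) = LinearMap.ker (Dmap f)
  Dinvol : ∀ M : ModuleCat.{0} S, Module.Finite S ↥M → Nonempty (↥(D (D M)) ≃ₗ[S] ↥M)
  DL : ∀ lam, Nonempty (↥(D (Q.L lam)) ≃ₗ[S] ↥(Q.L lam))

/-- Strong property A: `mu < lam` implies `gfd (L mu) < gfd (L lam)`. -/
def StrongPropA (Q : QHData S Λ) : Prop :=
  ∀ mu lam : Λ, mu < lam → gfd S Q (Q.L mu) < gfd S Q (Q.L lam)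

/-- Property A: `mu < lam` implies `gfd (L mu) ≤ gfd (L lam)`. -/
def PropA (Q : QHData S Λ) : Prop :=
  ∀ mu lam : Λ, mu < lam → gfd S Q (Q.L mu) ≤ gfd S Q (Q.L lam)

/-- Property B: `mu < lam` implies `wfd (∇ mu) ≤ wfd (∇ lam)`. -/
def PropB (Q : QHData S Λ) : Prop :=
  ∀ mu lam : Λ, mu < lam → wfd S Q (Q.costd mu) ≤ wfd S Q (Q.costd lam)

/-- Property C: `wfd (∇ lam) = gfd S - inj (∇ lam)` for all `lam`. -/
def PropC (Q : QHData S Λ) : Prop :=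
  ∀ lam : Λ, wfd S Q (Q.costd lam) = gfdAlg S Q - injdim S (Q.costd lam)

/-- Property D: `wfd (∇ lam) = wfd (L lam)` for all `lam`. -/
def PropD (Q : QHData S Λ) : Prop :=
  ∀ lam : Λ, wfd S Q (Q.costd lam) = wfd S Q (Q.L lam)

/-- Property E: `mu < lam` implies `inj (∇ mu) ≥ inj (∇ lam)`. -/
def PropE (Q : QHData S Λ) : Prop :=
  ∀ mu lam : Λ, mu < lam → injdim S (Q.costd lam) ≤ injdim S (Q.costd mu)

/-- The partial order is minimal for the quasi-hereditary structure: whenever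
`mu < lam` are adjacent, `L mu` is a composition factor of `Δ lam` or of `∇ lam`. -/
def MinimalOrder (Q : QHData S Λ) : Prop :=
  ∀ mu lam : Λ, mu < lam → (¬ ∃ nu, mu < nu ∧ nu < lam) →
    IsCompFactor S (Q.L mu) (Q.std lam) ∨ IsCompFactor S (Q.L mu) (Q.costd lam)

/-- `S` is connected (indecomposable as an algebra, i.e. one block): the only
central idempotents are `0` and `1`. -/
def ConnectedRing : Prop :=
  ∀ c : S, c * c = c → (∀ s : S, c * s = s * c) → c = 0 ∨ c = 1

/-- A tilting module: a module in `F(Δ) ∩ F(∇)`. -/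
def IsTilting (Q : QHData S Λ) (T : ModuleCat.{0} S) : Prop :=
  InStdFilt S Q T ∧ InCostdFilt S Q T

/-- The indecomposable tilting module `T(lam)`: an indecomposable tilting module in
which `L lam` occurs exactly once and all other composition factors `L mu` have
`mu < lam`. -/
def IsIndecTilting (Q : QHData S Λ) (lam : Λ) (T : ModuleCat.{0} S) : Prop :=
  IsTilting S Q T ∧ Nontrivial ↥T ∧
    (∀ A B : Submodule S ↥T, IsCompl A B → A = ⊥ ∨ B = ⊥) ∧
    CompFactorMult S (Q.L lam) T 1 ∧
    ∀ mu, IsCompFactor S (Q.L mu) T → mu = lam ∨ mu < lam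

/-- A full tilting module: a (finite-dimensional) tilting module having every
indecomposable tilting module as a direct summand. -/
def IsFullTilting (Q : QHData S Λ) (T : ModuleCat.{0} S) : Prop :=
  IsTilting S Q T ∧ Module.Finite S ↥T ∧
    ∀ (lam : Λ) (Tl : ModuleCat.{0} S), IsIndecTilting S Q lam Tl →
      ∃ Cc : ModuleCat.{0} S, Nonempty (↥T ≃ₗ[S] (↥Tl × ↥Cc))

/-- The Ringel dual ring `S' = End_S(T)^op`. -/
abbrev RingelDualRing (T : ModuleCat.{0} S) : Type := (Module.End S ↥T)ᵐᵒᵖ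

/-- `Hom_S(T, X)` is a module over `S' = End_S(T)^op` via `f • φ = φ ∘ f`. -/
instance homTModule (T X : ModuleCat.{0} S) :
    Module (RingelDualRing S T) (↥T →ₗ[S] ↥X) where
  smul a φ := φ ∘ₗ a.unop
  one_smul φ := rfl
  mul_smul a b φ := rfl
  smul_zero a := rfl
  smul_add a φ ψ := rfl
  add_smul a b φ := by
    ext x
    show φ ((a.unop + b.unop) x) = φ (a.unop x) + φ (b.unop x)
    rw [LinearMap.add_apply, map_add]
  zero_smul φ := by
    ext x
    show φ ((0 : Module.End S ↥T) x) = 0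
    rw [LinearMap.zero_apply, map_zero]

/-- The `S'`-module `Hom_S(T, X)`, i.e. the image of `X` under the functor
`F = Hom_S(T, -)`. -/
noncomputable def homTMod (T X : ModuleCat.{0} S) :
    ModuleCat.{0} (RingelDualRing S T) :=
  ModuleCat.of (RingelDualRing S T) (↥T →ₗ[S] ↥X)

/-- `Q'` is a Ringel dual quasi-hereditary structure for `(Q, T)`:
`T` is a full tilting module, `Q'` is a quasi-hereditary structure on
`S' = End_S(T)^op` for the opposite poset, and its standard modules are
`Δ'(lam) = Hom_S(T, ∇(lam))`. -/
def IsRingelDualData (Q : QHData S Λ) (T : ModuleCat.{0} S)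
    (Q' : QHData (RingelDualRing S T) Λᵒᵈ) : Prop :=
  IsFullTilting S Q T ∧
    ∀ lam : Λ, Nonempty
      (↥(Q'.std (OrderDual.toDual lam)) ≃ₗ[RingelDualRing S T]
        (↥T →ₗ[S] ↥(Q.costd lam)))

/-- `0 → T_d → ⋯ → T_0 → M → 0` exact with all `T_i` tilting modules. -/
def TiltResLE (Q : QHData S Λ) (M : ModuleCat.{0} S) (d : ℕ) : Prop :=
  ∃ (N : Fin (d + 2) → ModuleCat.{0} S)
    (f : ∀ i : Fin (d + 1), ↥(N i.castSucc) →ₗ[S] ↥(N i.succ)),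
    IsExactSeq S d N f ∧ N (Fin.last (d + 1)) = M ∧
    ∀ i : Fin (d + 1), IsTilting S Q (N i.castSucc)

/-- An idempotent `e` is primitive if it is nonzero and is not the sum of two
nonzero orthogonal idempotents. -/
def IsPrimitiveIdempotent (e : S) : Prop :=
  e * e = e ∧ e ≠ 0 ∧ ∀ a b : S, a * a = a → b * b = b → a * b = 0 → b * a = 0 →
    e = a + b → a = 0 ∨ b = 0

/-- The additive subgroup `e•M = {m | e • m = m}` of `M` (for `e` idempotent). -/
def cornerSet (eG : S) (M : ModuleCat.{0} S) : AddSubgroup ↥M where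
  carrier := {m | eG • m = m}
  add_mem' := by
    intro a b ha hb
    simp only [Set.mem_setOf_eq] at *
    rw [smul_add, ha, hb]
  zero_mem' := by
    simp only [Set.mem_setOf_eq]
    rw [smul_zero]
  neg_mem' := by
    intro a ha
    simp only [Set.mem_setOf_eq] at *
    rw [smul_neg, ha]

/-- The `R`-module structure on `e•M`, where `ι : R → S` identifies `R` with the
corner ring `eSe` (as a non-unital ring, with `ι 1 = e`). -/
def cornerModuleStructure (R : Type) [Ring R] (ι : R →ₙ+* S) (eG : S)
    (hone : ι 1 = eG) (hrange : ∀ r : R, eG * ι r * eG = ι r)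
    (M : ModuleCat.{0} S) : Module R ↥(cornerSet S eG M) where
  smul r m := ⟨ι r • (m : ↥M), by
    have hm : eG • (m : ↥M) = (m : ↥M) := m.2
    show eG • (ι r • (m : ↥M)) = ι r • (m : ↥M)
    have h : eG • (ι r • (m : ↥M)) = (eG * ι r * eG) • (m : ↥M) := by
      rw [mul_assoc, mul_smul, mul_smul, hm]
    rw [h, hrange]⟩
  one_smul m := by
    apply Subtype.ext
    show ι 1 • (m : ↥M) = (m : ↥M)
    rw [hone]
    exact m.2
  mul_smul r s m := by
    apply Subtype.ext
    show ι (r * s) • (m : ↥M) = ι r • (ι s • (m : ↥M))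
    rw [map_mul, mul_smul]
  smul_zero r := by
    apply Subtype.ext
    show ι r • (0 : ↥M) = 0
    rw [smul_zero]
  smul_add r m n := by
    apply Subtype.ext
    show ι r • ((m : ↥M) + (n : ↥M)) = ι r • (m : ↥M) + ι r • (n : ↥M)
    rw [smul_add]
  add_smul r s m := by
    apply Subtype.ext
    show ι (r + s) • (m : ↥M) = ι r • (m : ↥M) + ι s • (m : ↥M)
    rw [map_add, add_smul]
  zero_smul m := by
    apply Subtype.ext
    show ι 0 • (m : ↥M) = 0
    rw [map_zero, zero_smul]

/-- The `R`-module `e•M`, where `R ≅ eSe` via `ι`. -/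
noncomputable def cornerMod (R : Type) [Ring R] (ι : R →ₙ+* S) (eG : S)
    (hone : ι 1 = eG) (hrange : ∀ r : R, eG * ι r * eG = ι r)
    (M : ModuleCat.{0} S) : ModuleCat.{0} R :=
  @ModuleCat.of R _ ↥(cornerSet S eG M) _
    (cornerModuleStructure S R ι eG hone hrange M)

end QHPaper

/-!
The proof rests on `Extⁱ(Δ(λ), ∇(μ)) = 0` for `i > 0`, which turns dimensions into Ext-vanishing:
for finitely generated `M`, `wfd(M) ≤ n` if and only if `Extⁱ(M, ∇(μ)) = 0` for all `μ` and all
`i > n`. The duality exchanges `Δ(λ)` and `∇(λ)`, so `gfd(M) = wfd(M°)`; in particular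
`gfd(L(λ)) = wfd(L(λ))`, and `Extⁱ(M, ∇(μ)) = 0` for `i > gfd(S)` and every finitely generated `M`.

The cokernel of `L(λ) → ∇(λ)` has composition factors `L(μ)` with `μ ≤ λ` only, so property A
gives `wfd(∇(λ)) = wfd(L(λ))`, which is monotone in `λ`. Baer's criterion, applied to the modules
`S ⧸ J`, gives `inj(∇(λ)) ≤ gfd(S)`. Hence the subtraction in property C is not truncated, and
`inj(∇(λ)) = gfd(S) - wfd(L(λ))` is antitone in `λ`.
-/

namespace QHPaper

universe u v w

/-! ### Short exact sequences, essential maps and vanishing of Ext -/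

section ShortExact

variable {R : Type u} [Ring R]
variable {A B C : Type v} {X : Type w}
variable [AddCommGroup A] [AddCommGroup B] [AddCommGroup C] [AddCommGroup X]
variable [Module R A] [Module R B] [Module R C] [Module R X]

/-- A short exact sequence `0 → A → B → C → 0` of modules, stated for bare linear maps so that
the terms may be submodules and quotients as well as objects of `ModuleCat R`. -/
structure IsShortExact (f : A →ₗ[R] B) (g : B →ₗ[R] C) : Prop where
  injective : Function.Injective f
  surjective : Function.Surjective g
  exact : Function.Exact f g

theorem isShortExact_subtype_mkQ (N : Submodule R B) : IsShortExact N.subtype N.mkQ :=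
  ⟨N.injective_subtype, N.mkQ_surjective, LinearMap.exact_subtype_mkQ N⟩

theorem isShortExact_subtype_ker {g : B →ₗ[R] C} (hg : Function.Surjective g) :
    IsShortExact (LinearMap.ker g).subtype g :=
  ⟨Submodule.injective_subtype _, hg, LinearMap.exact_subtype_ker_map g⟩

theorem isShortExact_mkQ_range {f : A →ₗ[R] B} (hf : Function.Injective f) :
    IsShortExact f (LinearMap.range f).mkQ :=
  ⟨hf, Submodule.mkQ_surjective _, LinearMap.exact_map_mkQ_range f⟩

theorem isShortExact_inclusion_mkQ {N₁ N₂ : Submodule R B} (h : N₁ ≤ N₂) :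
    IsShortExact (Submodule.inclusion h) (N₁.comap N₂.subtype).mkQ := by
  refine ⟨Submodule.inclusion_injective h, Submodule.mkQ_surjective _, ?_⟩
  rw [LinearMap.exact_iff, Submodule.ker_mkQ, Submodule.range_inclusion]

namespace IsShortExact

variable {f : A →ₗ[R] B} {g : B →ₗ[R] C}

theorem comp_eq_zero (h : IsShortExact f g) : g ∘ₗ f = 0 :=
  h.exact.linearMap_comp_eq_zero

theorem comp_equiv {A' : Type v} [AddCommGroup A'] [Module R A'] (h : IsShortExact f g)
    (e : A' ≃ₗ[R] A) : IsShortExact (f ∘ₗ e.toLinearMap) g where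
  injective := h.injective.comp e.injective
  surjective := h.surjective
  exact := by rw [LinearMap.exact_iff, LinearEquiv.range_comp, h.exact.linearMap_ker_eq]

theorem equiv_comp {C' : Type v} [AddCommGroup C'] [Module R C'] (h : IsShortExact f g)
    (e : C ≃ₗ[R] C') : IsShortExact f (e.toLinearMap ∘ₗ g) where
  injective := h.injective
  surjective := e.surjective.comp h.surjective
  exact := by rw [LinearMap.exact_iff, LinearEquiv.ker_comp, h.exact.linearMap_ker_eq]

theorem conj_equiv {B' : Type v} [AddCommGroup B'] [Module R B'] (h : IsShortExact f g)
    (e : B ≃ₗ[R] B') : IsShortExact (e.toLinearMap ∘ₗ f) (g ∘ₗ e.symm.toLinearMap) where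
  injective := e.injective.comp h.injective
  surjective := h.surjective.comp e.symm.surjective
  exact x := by
    rw [LinearMap.comp_apply, LinearEquiv.coe_coe, h.exact]
    exact exists_congr fun y => e.eq_symm_apply

theorem exists_lift (h : IsShortExact f g) {u : X →ₗ[R] B} (hu : g ∘ₗ u = 0) :
    ∃ v : X →ₗ[R] A, f ∘ₗ v = u := by
  let e := LinearEquiv.ofInjective f h.injective
  have hmem (x : X) : u x ∈ LinearMap.range f := (h.exact _).1 (LinearMap.congr_fun hu x)
  refine ⟨e.symm.toLinearMap ∘ₗ u.codRestrict _ hmem, LinearMap.ext fun x => ?_⟩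
  exact congrArg Subtype.val (e.apply_symm_apply ⟨u x, hmem x⟩)

theorem exists_pullback {C' D : Type v} [AddCommGroup C'] [AddCommGroup D]
    [Module R C'] [Module R D] (h : IsShortExact f g) {a : C' →ₗ[R] C} {b : C →ₗ[R] D}
    (hab : IsShortExact a b) :
    ∃ (f' : A →ₗ[R] LinearMap.ker (b ∘ₗ g)) (g' : LinearMap.ker (b ∘ₗ g) →ₗ[R] C'),
      IsShortExact f' g' := by
  obtain ⟨g', hg'⟩ := hab.exists_lift (u := g ∘ₗ (LinearMap.ker (b ∘ₗ g)).subtype)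
    (LinearMap.ext fun x => x.2)
  replace hg' (x) : a (g' x) = g x := LinearMap.congr_fun hg' x
  have hf (x : A) : f x ∈ LinearMap.ker (b ∘ₗ g) := by
    rw [LinearMap.mem_ker, LinearMap.comp_apply, h.exact.apply_apply_eq_zero, map_zero]
  refine ⟨f.codRestrict _ hf, g', ⟨fun x y hxy => h.injective (congrArg Subtype.val hxy), ?_, ?_⟩⟩
  · intro c
    obtain ⟨y, hy⟩ := h.surjective (a c)
    have hmem : y ∈ LinearMap.ker (b ∘ₗ g) := by
      rw [LinearMap.mem_ker, LinearMap.comp_apply, hy, hab.exact.apply_apply_eq_zero]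
    exact ⟨⟨y, hmem⟩, hab.injective ((hg' _).trans hy)⟩
  · intro x
    rw [← map_eq_zero_iff a hab.injective, hg', h.exact]
    exact exists_congr fun y => ⟨fun hy => Subtype.ext hy, fun hy => congrArg Subtype.val hy⟩

theorem finite_right [Module.Finite R B] (h : IsShortExact f g) : Module.Finite R C :=
  .of_surjective g h.surjective

theorem finite_left [IsNoetherianRing R] [Module.Finite R B] (h : IsShortExact f g) :
    Module.Finite R A :=
  .of_injective f h.injective

theorem finite_middle [Module.Finite R A] [Module.Finite R C] (h : IsShortExact f g) :
    Module.Finite R B :=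
  .of_exact h.exact h.surjective

end IsShortExact

theorem isShortExact_equiv_zero (e : A ≃ₗ[R] B) :
    IsShortExact e.toLinearMap (0 : B →ₗ[R] PUnit.{v + 1}) where
  injective := e.injective
  surjective _ := ⟨0, rfl⟩
  exact x := ⟨fun _ => e.surjective x, fun _ => rfl⟩

theorem isShortExact_zero_equiv (e : B ≃ₗ[R] C) :
    IsShortExact (0 : PUnit.{v + 1} →ₗ[R] B) e.toLinearMap where
  injective _ _ _ := rfl
  surjective := e.surjective
  exact := by rw [LinearMap.exact_iff, LinearEquiv.ker, LinearMap.range_zero]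

end ShortExact

section Covers

variable {R : Type u} [Ring R]
variable {A B C : Type v} [AddCommGroup A] [AddCommGroup B] [AddCommGroup C]
variable [Module R A] [Module R B] [Module R C]

/-- A superfluous epimorphism: a surjection whose kernel is superfluous, i.e. has only `⊤` as
supplement. -/
structure IsSuperfluousEpi (p : A →ₗ[R] B) : Prop where
  surjective : Function.Surjective p
  eq_top_of_sup_ker : ∀ N : Submodule R A, N ⊔ LinearMap.ker p = ⊤ → N = ⊤

/-- An essential monomorphism: an injection whose range meets every nonzero submodule. -/
structure IsEssentialMono (j : A →ₗ[R] B) : Prop where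
  injective : Function.Injective j
  eq_bot_of_inf_range : ∀ N : Submodule R B, N ⊓ LinearMap.range j = ⊥ → N = ⊥

theorem IsSuperfluousEpi.surjective_of_comp {p : B →ₗ[R] C} (hp : IsSuperfluousEpi p)
    {h : A →ₗ[R] B} (hs : Function.Surjective (p ∘ₗ h)) : Function.Surjective h := by
  refine LinearMap.range_eq_top.1 (hp.eq_top_of_sup_ker _ ?_)
  rw [← Submodule.comap_map_eq, ← LinearMap.range_comp, LinearMap.range_eq_top.2 hs,
    Submodule.comap_top]

theorem IsEssentialMono.injective_of_comp {j : A →ₗ[R] B} (hj : IsEssentialMono j)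
    {h : B →ₗ[R] C} (hi : Function.Injective (h ∘ₗ j)) : Function.Injective h := by
  refine LinearMap.ker_eq_bot.1 (hj.eq_bot_of_inf_range _ ((Submodule.eq_bot_iff _).2 ?_))
  rintro _ ⟨hx, a, rfl⟩
  rw [(map_eq_zero_iff _ hi).1 hx, map_zero]

theorem IsSuperfluousEpi.equiv_comp {p : A →ₗ[R] B} (hp : IsSuperfluousEpi p) (e : B ≃ₗ[R] C) :
    IsSuperfluousEpi (e.toLinearMap ∘ₗ p) :=
  ⟨e.surjective.comp hp.surjective, fun N hN => hp.eq_top_of_sup_ker N (by rwa [e.ker_comp] at hN)⟩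

theorem IsEssentialMono.comp_equiv {j : B →ₗ[R] C} (hj : IsEssentialMono j) (e : A ≃ₗ[R] B) :
    IsEssentialMono (j ∘ₗ e.toLinearMap) :=
  ⟨hj.injective.comp e.injective,
    fun N hN => hj.eq_bot_of_inf_range N (by rwa [e.range_comp] at hN)⟩

theorem isSuperfluousEpi_of_forall [IsNoetherian R B] {p : B →ₗ[R] C}
    (hp : Function.Surjective p)
    (h : ∀ {A : Type v} [AddCommGroup A] [Module R A] [Module.Finite R A] (f : A →ₗ[R] B),
      Function.Surjective (p ∘ₗ f) → Function.Surjective f) : IsSuperfluousEpi p := by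
  refine ⟨hp, fun N hN => ?_⟩
  rw [← N.range_subtype, LinearMap.range_eq_top]
  refine h _ (LinearMap.range_eq_top.1 ?_)
  rw [LinearMap.range_comp, N.range_subtype,
    LinearMap.map_eq_top_iff (LinearMap.range_eq_top.2 hp), hN]

theorem isEssentialMono_of_forall [Module.Finite R B] {j : A →ₗ[R] B}
    (hj : Function.Injective j)
    (h : ∀ {C : Type v} [AddCommGroup C] [Module R C] [Module.Finite R C] (f : B →ₗ[R] C),
      Function.Injective (f ∘ₗ j) → Function.Injective f) : IsEssentialMono j := by
  refine ⟨hj, fun N hN => ?_⟩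
  rw [← N.ker_mkQ, LinearMap.ker_eq_bot]
  refine h _ (LinearMap.ker_eq_bot.1 (LinearMap.ker_eq_bot'.2 fun x hx => ?_))
  have hmem : j x ∈ N ⊓ LinearMap.range j := ⟨(Submodule.Quotient.mk_eq_zero N).1 hx, x, rfl⟩
  rw [hN, Submodule.mem_bot] at hmem
  exact (map_eq_zero_iff j hj).1 hmem

end Covers

section ExtVanishing

variable {R : Type u} [Ring R]
variable {A B C X Y : Type v}
variable [AddCommGroup A] [AddCommGroup B] [AddCommGroup C] [AddCommGroup X] [AddCommGroup Y]
variable [Module R A] [Module R B] [Module R C] [Module R X] [Module R Y]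

theorem IsShortExact.shortExact_ofHom {f : A →ₗ[R] B} {g : B →ₗ[R] C} (h : IsShortExact f g) :
    (ShortComplex.mk (ModuleCat.ofHom f) (ModuleCat.ofHom g)
      (ModuleCat.hom_ext h.comp_eq_zero)).ShortExact where
  exact := (ShortComplex.moduleCat_exact_iff_range_eq_ker _).2 h.exact.linearMap_ker_eq.symm
  mono_f := (ModuleCat.mono_iff_injective _).2 h.injective
  epi_g := (ModuleCat.epi_iff_surjective _).2 h.surjective

variable [Small.{v} R]

/-- `Extⁱ(X, Y) = 0`. -/
def ExtVanishes (R : Type u) [Ring R] [Small.{v} R] (X Y : Type v) [AddCommGroup X] [Module R X]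
    [AddCommGroup Y] [Module R Y] (i : ℕ) : Prop :=
  ∀ x : Abelian.Ext (ModuleCat.of R X) (ModuleCat.of R Y) i, x = 0

theorem extVanishes_zero_iff : ExtVanishes R X Y 0 ↔ ∀ u : X →ₗ[R] Y, u = 0 := by
  have e : Abelian.Ext (ModuleCat.of R X) (ModuleCat.of R Y) 0 ≃ (X →ₗ[R] Y) :=
    (Equiv.ofBijective _ (Abelian.Ext.mk₀_bijective _ _)).symm.trans ModuleCat.homEquiv
  exact (subsingleton_iff_forall_eq 0).symm.trans
    (e.subsingleton_congr.trans (subsingleton_iff_forall_eq 0))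

theorem extVanishes_of_projective [Module.Projective R X] (i : ℕ) :
    ExtVanishes R X Y (i + 1) :=
  have : Projective (ModuleCat.of R X) := (IsProjective.iff_projective X).1 ‹_›
  Abelian.Ext.eq_zero_of_projective

theorem extVanishes_of_injective [Module.Injective R Y] (i : ℕ) :
    ExtVanishes R X Y (i + 1) :=
  have : Injective (ModuleCat.of R Y) := Module.injective_object_of_injective_module R Y
  Abelian.Ext.eq_zero_of_injective

theorem extVanishes_of_subsingleton_left [Subsingleton X] (i : ℕ) : ExtVanishes R X Y i := by
  cases i with
  | zero => exact extVanishes_zero_iff.2 fun u => Subsingleton.elim _ _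
  | succ i => exact extVanishes_of_projective i

theorem extVanishes_of_subsingleton_right [Subsingleton Y] (i : ℕ) : ExtVanishes R X Y i := by
  cases i with
  | zero => exact extVanishes_zero_iff.2 fun u => Subsingleton.elim _ _
  | succ i =>
    have : Module.Injective R Y := ⟨fun _ _ _ _ _ _ _ _ _ => ⟨0, fun _ => Subsingleton.elim _ _⟩⟩
    exact extVanishes_of_injective i

namespace IsShortExact

variable {f : A →ₗ[R] B} {g : B →ₗ[R] C} {i : ℕ}

theorem extVanishes_from_middle (h : IsShortExact f g) (hA : ExtVanishes R A Y i)
    (hC : ExtVanishes R C Y i) : ExtVanishes R B Y i := by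
  intro x
  obtain ⟨y, rfl⟩ := Abelian.Ext.contravariant_sequence_exact₂ h.shortExact_ofHom _ x (hA _)
  rw [hC y, Abelian.Ext.comp_zero]

theorem extVanishes_from_right (h : IsShortExact f g) (hA : ExtVanishes R A Y i)
    (hB : ExtVanishes R B Y (i + 1)) : ExtVanishes R C Y (i + 1) := by
  intro x
  obtain ⟨y, rfl⟩ := Abelian.Ext.contravariant_sequence_exact₃ h.shortExact_ofHom _ x (hB _)
    (Nat.add_comm 1 i)
  rw [hA y, Abelian.Ext.comp_zero]

theorem extVanishes_from_left (h : IsShortExact f g) (hB : ExtVanishes R B Y i)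
    (hC : ExtVanishes R C Y (i + 1)) : ExtVanishes R A Y i := by
  intro x
  obtain ⟨y, rfl⟩ := Abelian.Ext.contravariant_sequence_exact₁ h.shortExact_ofHom _ x
    (Nat.add_comm 1 i) (hC _)
  rw [hB y, Abelian.Ext.comp_zero]

theorem extVanishes_to_middle (h : IsShortExact f g) (hA : ExtVanishes R X A i)
    (hC : ExtVanishes R X C i) : ExtVanishes R X B i := by
  intro x
  obtain ⟨y, rfl⟩ := Abelian.Ext.covariant_sequence_exact₂ _ h.shortExact_ofHom x (hC _)
  rw [hA y, Abelian.Ext.zero_comp]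

theorem extVanishes_to_left (h : IsShortExact f g) (hC : ExtVanishes R X C i)
    (hB : ExtVanishes R X B (i + 1)) : ExtVanishes R X A (i + 1) := by
  intro x
  obtain ⟨y, rfl⟩ := Abelian.Ext.covariant_sequence_exact₁ _ h.shortExact_ofHom x (hB _) rfl
  rw [hC y, Abelian.Ext.zero_comp]

theorem extVanishes_to_right (h : IsShortExact f g) (hB : ExtVanishes R X B i)
    (hA : ExtVanishes R X A (i + 1)) : ExtVanishes R X C i := by
  intro x
  obtain ⟨y, rfl⟩ := Abelian.Ext.covariant_sequence_exact₃ _ h.shortExact_ofHom x rfl (hA _)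
  rw [hB y, Abelian.Ext.zero_comp]

theorem exists_comp_eq_of_extVanishes (h : IsShortExact f g) (hX : ExtVanishes R X A 1)
    (u : X →ₗ[R] C) : ∃ v : X →ₗ[R] B, g ∘ₗ v = u := by
  obtain ⟨y, hy⟩ := Abelian.Ext.covariant_sequence_exact₃ _ h.shortExact_ofHom
    (Abelian.Ext.mk₀ (ModuleCat.ofHom u)) rfl (hX _)
  obtain ⟨v, rfl⟩ := (Abelian.Ext.mk₀_bijective _ _).2 y
  rw [Abelian.Ext.mk₀_comp_mk₀] at hy
  exact ⟨v.hom, congrArg ModuleCat.Hom.hom ((Abelian.Ext.mk₀_bijective _ _).1 hy)⟩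

theorem exists_extension_of_extVanishes (h : IsShortExact f g) (hY : ExtVanishes R C Y 1)
    (u : A →ₗ[R] Y) : ∃ v : B →ₗ[R] Y, v ∘ₗ f = u := by
  obtain ⟨y, hy⟩ := Abelian.Ext.contravariant_sequence_exact₁ h.shortExact_ofHom _
    (Abelian.Ext.mk₀ (ModuleCat.ofHom u)) rfl (hY _)
  obtain ⟨v, rfl⟩ := (Abelian.Ext.mk₀_bijective _ _).2 y
  rw [Abelian.Ext.mk₀_comp_mk₀] at hy
  exact ⟨v.hom, congrArg ModuleCat.Hom.hom ((Abelian.Ext.mk₀_bijective _ _).1 hy)⟩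

end IsShortExact

theorem ExtVanishes.of_equiv_left {i : ℕ} (h : ExtVanishes R A Y i) (e : A ≃ₗ[R] B) :
    ExtVanishes R B Y i :=
  (isShortExact_equiv_zero e).extVanishes_from_middle h (extVanishes_of_subsingleton_left i)

end ExtVanishing

/-! ### Exact sequences as spliced short exact sequences -/

section Chains

variable {R : Type u} [Ring R] {𝒞 : ModuleCat.{v} R → Prop} {n : ℕ} {A K X M : ModuleCat.{v} R}

/-- An exact sequence `0 → A → X₁ → ⋯ → Xₙ → M → 0` with all `Xᵢ` in the class `𝒞`, built by
splicing short exact sequences. Both ends are free, so that the same notion describes left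
resolutions of `M` and right resolutions of `A`. -/
inductive ExactChain (𝒞 : ModuleCat.{v} R → Prop) : ℕ → ModuleCat.{v} R → ModuleCat.{v} R → Prop
  | ofEquiv {A M : ModuleCat.{v} R} (e : A ≃ₗ[R] M) : ExactChain 𝒞 0 A M
  | cons {n : ℕ} {A X K M : ModuleCat.{v} R} {f : A →ₗ[R] X} {g : X →ₗ[R] K}
      (hfg : IsShortExact f g) (hX : 𝒞 X) (h : ExactChain 𝒞 n K M) : ExactChain 𝒞 (n + 1) A M

namespace ExactChain

theorem comp_equiv (h : ExactChain 𝒞 n K M) (e : A ≃ₗ[R] K) : ExactChain 𝒞 n A M := by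
  cases h with
  | ofEquiv e' => exact ofEquiv (e.trans e')
  | cons hfg hX h => exact cons (hfg.comp_equiv e) hX h

theorem snoc (h : ExactChain 𝒞 n A K) {f : K →ₗ[R] X} {g : X →ₗ[R] M} (hfg : IsShortExact f g)
    (hX : 𝒞 X) : ExactChain 𝒞 (n + 1) A M := by
  induction h with
  | ofEquiv e => exact cons (hfg.comp_equiv e) hX (ofEquiv (.refl R M))
  | cons hfg' hX' _ ih => exact cons hfg' hX' (ih hfg)

end ExactChain
end Chains

section ExactSequences

variable {S : Type} [Ring S] {𝒞 : ModuleCat.{0} S → Prop} {n : ℕ} {A M : ModuleCat.{0} S}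

theorem ExactChain.of_isExactSeq {N : Fin (n + 2) → ModuleCat.{0} S}
    {f : ∀ i : Fin (n + 1), N i.castSucc →ₗ[S] N i.succ} (h : IsExactSeq S n N f)
    (hN : ∀ i : Fin n, 𝒞 (N i.succ.castSucc)) :
    ExactChain 𝒞 n (N 0) (N (Fin.last (n + 1))) := by
  obtain ⟨hinj, hsurj, hexact⟩ := h
  have tail (i : Fin (n + 1)) : ExactChain 𝒞 (n - i)
      (ModuleCat.of S (LinearMap.range (f i))) (N (Fin.last (n + 1))) := by
    induction i using Fin.reverseInduction with
    | last =>
      rw [Fin.val_last, Nat.sub_self]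
      exact .ofEquiv (LinearEquiv.ofTop _ (LinearMap.range_eq_top.2 hsurj))
    | cast i ih =>
      have hi : n - i.castSucc = (n - i.succ) + 1 := by
        simp only [Fin.val_castSucc, Fin.val_succ]; omega
      rw [hi]
      refine .cons (f := (LinearMap.range (f i.castSucc)).subtype) (g := (f i.succ).rangeRestrict)
        ⟨Submodule.injective_subtype _, LinearMap.surjective_rangeRestrict _, ?_⟩ (hN i) ih
      rw [LinearMap.exact_iff, LinearMap.ker_rangeRestrict]
      exact (hexact i).symm.trans (Submodule.range_subtype _).symm
  exact (tail 0).comp_equiv (LinearEquiv.ofInjective (f 0) hinj)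

theorem IsExactSeq.cons {N : Fin (n + 2) → ModuleCat.{0} S}
    {f : ∀ i : Fin (n + 1), N i.castSucc →ₗ[S] N i.succ} (h : IsExactSeq S n N f)
    {X : ModuleCat.{0} S} {a : A →ₗ[S] X} {b : X →ₗ[S] N 0} (hab : IsShortExact a b) :
    IsExactSeq S (n + 1) (Fin.cons A (Fin.cons X fun i => N i.succ))
      (Fin.cons a (Fin.cons (f 0 ∘ₗ b) fun i => f i.succ)) := by
  obtain ⟨hinj, hsurj, hexact⟩ := h
  refine ⟨hab.injective, ?_, Fin.cases ?_ fun i => ?_⟩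
  · cases n with
    | zero => exact hsurj.comp hab.surjective
    | succ n => exact hsurj
  · exact hab.exact.linearMap_ker_eq.symm.trans
      (LinearMap.ker_comp_of_ker_eq_bot b (LinearMap.ker_eq_bot.2 hinj)).symm
  · cases n with
    | zero => exact i.elim0
    | succ n =>
      revert i
      refine Fin.cases ?_ fun i => hexact i.succ
      exact (LinearMap.range_comp_of_range_eq_top (f 0)
        (LinearMap.range_eq_top.2 hab.surjective)).trans (hexact 0)

theorem exactChain_iff : ExactChain 𝒞 n A M ↔ ∃ (N : Fin (n + 2) → ModuleCat.{0} S)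
    (f : ∀ i : Fin (n + 1), N i.castSucc →ₗ[S] N i.succ), IsExactSeq S n N f ∧
      N 0 = A ∧ N (Fin.last (n + 1)) = M ∧ ∀ i : Fin n, 𝒞 (N i.succ.castSucc) := by
  constructor
  · intro h
    induction h with
    | @ofEquiv A M e =>
      refine ⟨Fin.cons A fun _ => M, fun i => ?_, ?_, rfl, rfl, fun i => i.elim0⟩
      · rw [Fin.fin_one_eq_zero i]; exact e.toLinearMap
      · exact ⟨e.injective, e.surjective, fun i => i.elim0⟩
    | cons hfg hX _ ih =>
      obtain ⟨N, f, hNf, rfl, rfl, hN⟩ := ih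
      exact ⟨_, _, hNf.cons hfg, rfl, rfl, Fin.cases hX hN⟩
  · rintro ⟨N, f, hNf, rfl, rfl, hN⟩
    exact .of_isExactSeq hNf hN

theorem exists_isExactSeq_left_iff : (∃ (N : Fin (n + 2) → ModuleCat.{0} S)
    (f : ∀ i : Fin (n + 1), N i.castSucc →ₗ[S] N i.succ), IsExactSeq S n N f ∧
      N (Fin.last (n + 1)) = M ∧ ∀ i : Fin (n + 1), 𝒞 (N i.castSucc)) ↔
    ∃ A, 𝒞 A ∧ ExactChain 𝒞 n A M := by
  simp only [exactChain_iff, Fin.forall_fin_succ (n := n), Fin.castSucc_zero]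
  constructor
  · rintro ⟨N, f, hNf, hM, hA, hN⟩
    exact ⟨N 0, hA, N, f, hNf, rfl, hM, hN⟩
  · rintro ⟨A, hA, N, f, hNf, rfl, hM, hN⟩
    exact ⟨N, f, hNf, hM, hA, hN⟩

theorem exists_isExactSeq_right_iff : (∃ (N : Fin (n + 2) → ModuleCat.{0} S)
    (f : ∀ i : Fin (n + 1), N i.castSucc →ₗ[S] N i.succ), IsExactSeq S n N f ∧
      N 0 = A ∧ ∀ i : Fin (n + 1), 𝒞 (N i.succ)) ↔
    ∃ M, 𝒞 M ∧ ExactChain 𝒞 n A M := by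
  simp only [exactChain_iff, Fin.forall_fin_succ' (n := n), Fin.succ_castSucc, Fin.succ_last]
  constructor
  · rintro ⟨N, f, hNf, hA, hN, hM⟩
    exact ⟨N (Fin.last (n + 1)), hM, N, f, hNf, hA, rfl, hN⟩
  · rintro ⟨M, hM, N, f, hNf, hA, rfl, hN⟩
    exact ⟨N, f, hNf, hA, hN, hM⟩

end ExactSequences

/-! ### Filtrations with prescribed sections -/

section Filtrations

variable {S : Type} [Ring S] {ι : Type} {E : ι → ModuleCat.{0} S}

/-- Modules with a finite filtration whose sections are isomorphic to members of the family `E`,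
built by successively adding a section at the top. -/
inductive IsFilteredBy (E : ι → ModuleCat.{0} S) : ModuleCat.{0} S → Prop
  | ofSubsingleton {M : ModuleCat.{0} S} (h : Subsingleton M) : IsFilteredBy E M
  | snoc {A M : ModuleCat.{0} S} {i : ι} {f : A →ₗ[S] M} {g : M →ₗ[S] E i}
      (hfg : IsShortExact f g) (hA : IsFilteredBy E A) : IsFilteredBy E M

namespace IsFilteredBy

variable {A B C M : ModuleCat.{0} S}

theorem of_equiv (h : IsFilteredBy E A) (e : A ≃ₗ[S] B) : IsFilteredBy E B := by
  cases h with
  | ofSubsingleton _ => exact ofSubsingleton e.symm.subsingleton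
  | snoc hfg hA => exact snoc (hfg.conj_equiv e) hA

theorem single {i : ι} (e : M ≃ₗ[S] E i) : IsFilteredBy E M :=
  snoc (isShortExact_zero_equiv e) (ofSubsingleton (M := ModuleCat.of S PUnit) inferInstance)

theorem extension {f : A →ₗ[S] B} {g : B →ₗ[S] C} (hfg : IsShortExact f g)
    (hA : IsFilteredBy E A) (hC : IsFilteredBy E C) : IsFilteredBy E B := by
  induction hC generalizing B with
  | ofSubsingleton _ => exact hA.of_equiv (LinearEquiv.ofBijective f ⟨hfg.injective,
      fun y => (hfg.exact y).1 (Subsingleton.elim _ _)⟩)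
  | @snoc _ _ _ _ b hab _ ih =>
    obtain ⟨f', g', hfg'⟩ := hfg.exists_pullback hab
    exact snoc (isShortExact_subtype_ker (g := b ∘ₗ g) (hab.surjective.comp hfg.surjective))
      (ih (B := ModuleCat.of S _) hfg')

theorem finite [∀ i, Module.Finite S (E i)] (h : IsFilteredBy E M) : Module.Finite S M := by
  induction h with
  | ofSubsingleton _ => infer_instance
  | snoc hfg _ ih => exact hfg.finite_middle

theorem extVanishes {Y : ModuleCat.{0} S} {i : ℕ} (h : IsFilteredBy E M)
    (hE : ∀ k, ExtVanishes S (E k) Y i) : ExtVanishes S M Y i := by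
  induction h with
  | ofSubsingleton _ => exact extVanishes_of_subsingleton_left i
  | snoc hfg _ ih => exact hfg.extVanishes_from_middle ih (hE _)

theorem extVanishes_right {X : Type} [AddCommGroup X] [Module S X] {i : ℕ} (h : IsFilteredBy E M)
    (hE : ∀ k, ExtVanishes S X (E k) i) : ExtVanishes S X M i := by
  induction h with
  | ofSubsingleton _ => exact extVanishes_of_subsingleton_right i
  | snoc hfg _ ih => exact hfg.extVanishes_to_middle ih (hE _)

end IsFilteredBy

section Sections

variable {M : ModuleCat.{0} S} {n : ℕ} {f : Fin (n + 1) → Submodule S M}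

theorem isFilteredBy_of_chain (hf : Monotone f) (h0 : f 0 = ⊥)
    (j : Fin (n + 1)) (hE : ∀ i : Fin n, i.castSucc < j →
      ∃ k, Nonempty (subquot S (f i.castSucc) (f i.succ) ≃ₗ[S] E k)) :
    IsFilteredBy E (ModuleCat.of S (f j)) := by
  induction j using Fin.induction with
  | zero =>
    refine .ofSubsingleton ?_
    rw [h0]
    exact inferInstanceAs (Subsingleton (⊥ : Submodule S M))
  | succ j ih =>
    obtain ⟨k, ⟨e⟩⟩ := hE j j.castSucc_lt_succ
    exact .snoc ((isShortExact_inclusion_mkQ (hf j.castSucc_le_succ)).equiv_comp e)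
      (ih fun i hi => hE i (hi.trans j.castSucc_lt_succ))

theorem HasFiltrationWithSections.isFilteredBy {g : Fin n → ι}
    (h : HasFiltrationWithSections S M n f (fun i => E (g i))) : IsFilteredBy E M := by
  obtain ⟨hf, h0, htop, hsec⟩ := h
  exact (isFilteredBy_of_chain hf h0 (Fin.last n) fun i _ => ⟨g i, hsec i⟩).of_equiv
    (LinearEquiv.ofTop _ htop)

theorem HasFiltrationWithSections.isShortExact_last {f : Fin (n + 2) → Submodule S M}
    {D : Fin (n + 1) → ModuleCat.{0} S} (h : HasFiltrationWithSections S M (n + 1) f D) :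
    ∃ g : M →ₗ[S] D (Fin.last n), IsShortExact (f (Fin.last n).castSucc).subtype g := by
  obtain ⟨hf, -, htop, hsec⟩ := h
  obtain ⟨e⟩ := hsec (Fin.last n)
  have hses := (isShortExact_inclusion_mkQ (hf (Fin.last n).castSucc_le_succ)).equiv_comp e
  exact ⟨_, hses.conj_equiv (LinearEquiv.ofTop _ htop)⟩

theorem nonempty_subquot_equiv_of_surjective {A B : Submodule S M} {C : Type} [AddCommGroup C]
    [Module S C] (φ : B →ₗ[S] C) (hφ : Function.Surjective φ)
    (hker : LinearMap.ker φ = A.comap B.subtype) : Nonempty (subquot S A B ≃ₗ[S] C) :=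
  ⟨(Submodule.quotEquivOfEq _ _ hker.symm).trans (φ.quotKerEquivOfSurjective hφ)⟩

theorem nonempty_subquot_map_equiv {A : ModuleCat.{0} S} {a : A →ₗ[S] M}
    (ha : Function.Injective a) (X Y : Submodule S A) :
    Nonempty (subquot S (X.map a) (Y.map a) ≃ₗ[S] subquot S X Y) := by
  let e := Submodule.equivMapOfInjective a ha Y
  refine nonempty_subquot_equiv_of_surjective
    ((X.comap Y.subtype).mkQ ∘ₗ e.symm.toLinearMap)
    ((Submodule.mkQ_surjective _).comp e.symm.surjective) ?_
  rw [LinearMap.ker_comp, Submodule.ker_mkQ]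
  ext x
  obtain ⟨y, rfl⟩ := e.surjective x
  rw [Submodule.mem_comap, LinearEquiv.coe_coe, e.symm_apply_apply]
  exact (ha.mem_set_image (s := X)).symm

theorem HasFiltrationWithSections.snoc {A : ModuleCat.{0} S} {f : Fin (n + 1) → Submodule S A}
    {g : Fin n → ι} {k : ι} (h : HasFiltrationWithSections S A n f (fun i => E (g i)))
    {a : A →ₗ[S] M} {b : M →ₗ[S] E k} (hab : IsShortExact a b) :
    HasFiltrationWithSections S M (n + 1)
      (Fin.snoc (α := fun _ => Submodule S M) (fun i => (f i).map a) ⊤)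
      (fun i => E (Fin.snoc (α := fun _ => ι) g k i)) := by
  obtain ⟨hf, h0, htop, hsec⟩ := h
  refine ⟨?_, ?_, Fin.snoc_last _ _, fun i => ?_⟩
  · refine Fin.monotone_iff_le_succ.2 fun i => ?_
    cases i using Fin.lastCases with
    | last => rw [Fin.succ_last, Fin.snoc_last]; exact le_top
    | cast i =>
      rw [Fin.succ_castSucc, Fin.snoc_castSucc, Fin.snoc_castSucc]
      exact Submodule.map_mono (hf i.castSucc_le_succ)
  · rw [← Fin.castSucc_zero, Fin.snoc_castSucc, h0, Submodule.map_bot]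
  · cases i using Fin.lastCases with
    | last =>
      rw [Fin.succ_last, Fin.snoc_last, Fin.snoc_castSucc, htop, Submodule.map_top]
      beta_reduce
      rw [Fin.snoc_last]
      refine nonempty_subquot_equiv_of_surjective (b ∘ₗ Submodule.subtype ⊤)
        (hab.surjective.comp Submodule.topEquiv.surjective) ?_
      rw [LinearMap.ker_comp, hab.exact.linearMap_ker_eq]
    | cast i =>
      rw [Fin.succ_castSucc, Fin.snoc_castSucc, Fin.snoc_castSucc]
      beta_reduce
      rw [Fin.snoc_castSucc]
      obtain ⟨e⟩ := hsec i
      obtain ⟨e'⟩ := nonempty_subquot_map_equiv hab.injective (f i.castSucc) (f i.succ)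
      exact ⟨e'.trans e⟩

theorem isFilteredBy_iff : IsFilteredBy E M ↔ ∃ (n : ℕ) (f : Fin (n + 1) → Submodule S M)
    (g : Fin n → ι), HasFiltrationWithSections S M n f (fun i => E (g i)) := by
  refine ⟨fun h => ?_, fun ⟨_, _, _, h⟩ => h.isFilteredBy⟩
  induction h with
  | ofSubsingleton _ =>
    exact ⟨0, fun _ => ⊥, fun i => i.elim0, fun _ _ _ => le_rfl, rfl, Subsingleton.elim _ _,
      fun i => i.elim0⟩
  | snoc hfg _ ih =>
    obtain ⟨n, f, g, h⟩ := ih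
    exact ⟨n + 1, _, _, h.snoc hfg⟩

end Sections
end Filtrations

/-! ### Composition factors, standard and costandard modules -/

section SimpleTop

variable {R : Type u} [Ring R] {P A B : Type v} [AddCommGroup P] [AddCommGroup A] [AddCommGroup B]
variable [Module R P] [Module R A] [Module R B]

namespace IsSuperfluousEpi

variable {p : P →ₗ[R] A}

theorem le_ker [IsSimpleModule R A] (hp : IsSuperfluousEpi p) {N : Submodule R P} (hN : N ≠ ⊤) :
    N ≤ LinearMap.ker p := by
  by_contra hle
  have hcoatom : IsCoatom (LinearMap.ker p) := p.isCoatom_ker_of_surjective hp.surjective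
  exact hN (hp.eq_top_of_sup_ker N (sup_comm N _ ▸ hcoatom.2 _ (left_lt_sup.2 hle)))

theorem ker_eq_of_isSimpleModule [IsSimpleModule R A] [IsSimpleModule R B]
    (hp : IsSuperfluousEpi p) {u : P →ₗ[R] B} (hu : u ≠ 0) :
    LinearMap.ker u = LinearMap.ker p :=
  have hcoatom : IsCoatom (LinearMap.ker u) :=
    u.isCoatom_ker_of_surjective (u.surjective_of_ne_zero hu)
  (hcoatom.le_iff_eq (p.isCoatom_ker_of_surjective hp.surjective).1).1
    (hp.le_ker hcoatom.1) |>.symm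

theorem of_comp {u : P →ₗ[R] B} {q : B →ₗ[R] A} (hp : IsSuperfluousEpi (q ∘ₗ u))
    (hu : Function.Surjective u) : IsSuperfluousEpi q := by
  refine ⟨.of_comp hp.surjective, fun N hN => ?_⟩
  have hker : LinearMap.ker u ≤ N.comap u ⊔ LinearMap.ker (q ∘ₗ u) :=
    (LinearMap.ker_le_ker_comp u q).trans le_sup_right
  have hcomap : N.comap u ⊔ LinearMap.ker (q ∘ₗ u) = ⊤ := by
    rw [← sup_eq_left.2 hker, ← Submodule.comap_map_eq, Submodule.map_sup, LinearMap.ker_comp,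
      Submodule.map_comap_eq_of_surjective hu, Submodule.map_comap_eq_of_surjective hu, hN,
      Submodule.comap_top]
  rw [← Submodule.map_comap_eq_of_surjective hu N, hp.eq_top_of_sup_ker _ hcomap,
    Submodule.map_top, LinearMap.range_eq_top.2 hu]

end IsSuperfluousEpi

theorem IsEssentialMono.of_comp {j : P →ₗ[R] A} {κ : A →ₗ[R] B} (h : IsEssentialMono (κ ∘ₗ j))
    (hκ : Function.Injective κ) : IsEssentialMono j := by
  refine ⟨.of_comp h.injective, fun N hN => ?_⟩
  have hmap : N.map κ ⊓ LinearMap.range (κ ∘ₗ j) = ⊥ := by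
    rw [LinearMap.range_comp, ← Submodule.map_inf κ hκ, hN, Submodule.map_bot]
  exact Submodule.map_injective_of_injective hκ <|
    (h.eq_bot_of_inf_range _ hmap).trans (Submodule.map_bot κ).symm

end SimpleTop

namespace QHData

variable {S Λ : Type} [Ring S] [Fintype Λ] [PartialOrder Λ] (Q : QHData S Λ)

section Factors

variable {A B C M X : Type} [AddCommGroup A] [AddCommGroup B] [AddCommGroup C] [AddCommGroup M]
variable [AddCommGroup X] [Module S A] [Module S B] [Module S C] [Module S M] [Module S X]
variable {mu nu : Λ}

instance isSimpleModule_L (mu : Λ) : IsSimpleModule S (Q.L mu) := Q.simpleL mu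

instance nontrivial_L (mu : Λ) : Nontrivial (Q.L mu) := IsSimpleModule.nontrivial S _

instance finite_L (mu : Λ) : Module.Finite S (Q.L mu) := Q.finiteL mu

instance projective_P (mu : Λ) : Module.Projective S (Q.P mu) := (Q.projCover mu).1

instance injective_I (mu : Λ) : Module.Injective S (Q.I mu) := (Q.injHull mu).1

theorem exists_isSuperfluousEpi (mu : Λ) : ∃ π : Q.P mu →ₗ[S] Q.L mu, IsSuperfluousEpi π :=
  have ⟨π, hπ, htop⟩ := (Q.projCover mu).2
  ⟨π, hπ, htop⟩

theorem exists_isEssentialMono (mu : Λ) : ∃ ι : Q.L mu →ₗ[S] Q.I mu, IsEssentialMono ι :=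
  have ⟨ι, hι, hbot⟩ := (Q.injHull mu).2
  ⟨ι, hι, hbot⟩

/-- `L(μ)` is a composition factor of `M`, expressed by `Hom(P(μ), M) ≠ 0`; see
`hasFactor_iff_isCompFactor`. -/
def HasFactor (mu : Λ) (M : Type) [AddCommGroup M] [Module S M] : Prop :=
  ∃ u : Q.P mu →ₗ[S] M, u ≠ 0

variable {Q}

theorem HasFactor.of_injective {f : A →ₗ[S] B} (hf : Function.Injective f)
    (h : Q.HasFactor mu A) : Q.HasFactor mu B := by
  obtain ⟨u, hu⟩ := h
  exact ⟨f ∘ₗ u, fun h0 => hu ((LinearMap.cancel_left hf).1 (h0.trans (f.comp_zero).symm))⟩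

theorem HasFactor.of_surjective {g : B →ₗ[S] C} (hg : Function.Surjective g)
    (h : Q.HasFactor mu C) : Q.HasFactor mu B := by
  obtain ⟨u, hu⟩ := h
  obtain ⟨v, rfl⟩ := Module.projective_lifting_property g u hg
  exact ⟨v, fun h0 => hu (by rw [h0, LinearMap.comp_zero])⟩

theorem HasFactor.left_or_right {f : A →ₗ[S] B} {g : B →ₗ[S] C} (hfg : IsShortExact f g)
    (h : Q.HasFactor mu B) : Q.HasFactor mu A ∨ Q.HasFactor mu C := by
  obtain ⟨u, hu⟩ := h
  by_cases hgu : g ∘ₗ u = 0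
  · obtain ⟨v, rfl⟩ := hfg.exists_lift hgu
    exact .inl ⟨v, fun h0 => hu (by rw [h0, LinearMap.comp_zero])⟩
  · exact .inr ⟨g ∘ₗ u, hgu⟩

variable (Q)

theorem hasFactor_L (mu : Λ) : Q.HasFactor mu (Q.L mu) := by
  obtain ⟨π, hπ⟩ := Q.exists_isSuperfluousEpi mu
  exact ⟨π, LinearMap.ne_zero_of_surjective hπ.surjective⟩

variable {Q}

theorem HasFactor.nonempty_equiv [IsSimpleModule S X] (h : Q.HasFactor mu X) :
    Nonempty (X ≃ₗ[S] Q.L mu) := by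
  obtain ⟨u, hu⟩ := h
  obtain ⟨π, hπ⟩ := Q.exists_isSuperfluousEpi mu
  exact ⟨(u.quotKerEquivOfSurjective (u.surjective_of_ne_zero hu)).symm.trans <|
    (Submodule.quotEquivOfEq _ _ (hπ.ker_eq_of_isSimpleModule hu)).trans <|
    π.quotKerEquivOfSurjective hπ.surjective⟩

theorem HasFactor.eq (h : Q.HasFactor mu (Q.L nu)) : mu = nu := by
  by_contra hne
  exact (Q.nonisoL nu mu (Ne.symm hne)).false h.nonempty_equiv.some

theorem hasFactor_of_equiv (e : X ≃ₗ[S] Q.L mu) : Q.HasFactor mu X :=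
  (Q.hasFactor_L mu).of_injective (f := e.symm.toLinearMap) e.symm.injective

theorem isCompFactor_of_surjective {M L : ModuleCat.{0} S} {B : Submodule S M} (φ : B →ₗ[S] L)
    (hφ : Function.Surjective φ) : IsCompFactor S L M :=
  ⟨(LinearMap.ker φ).map B.subtype, B, Submodule.map_subtype_le _ _,
    nonempty_subquot_equiv_of_surjective φ hφ
      (Submodule.comap_map_eq_of_injective B.injective_subtype _).symm⟩

theorem hasFactor_iff_isCompFactor :
    Q.HasFactor mu M ↔ IsCompFactor S (Q.L mu) (ModuleCat.of S M) := by
  constructor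
  · rintro ⟨u, hu⟩
    obtain ⟨π, hπ⟩ := Q.exists_isSuperfluousEpi mu
    have hker : LinearMap.ker u ≤ LinearMap.ker π :=
      hπ.le_ker fun h => hu (LinearMap.ker_eq_top.1 h)
    have hlift : Function.Surjective ((LinearMap.ker u).liftQ π hker) :=
      LinearMap.range_eq_top.1 <|
        (Submodule.range_liftQ _ _ _).trans (LinearMap.range_eq_top.2 hπ.surjective)
    exact isCompFactor_of_surjective (M := ModuleCat.of S M)
      ((LinearMap.ker u).liftQ π hker ∘ₗ u.quotKerEquivRange.symm.toLinearMap)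
      (hlift.comp u.quotKerEquivRange.symm.surjective)
  · rintro ⟨A, B, -, ⟨e⟩⟩
    exact ((hasFactor_of_equiv e).of_surjective (Submodule.mkQ_surjective _)).of_injective
      B.injective_subtype

theorem HasFactor.mem_of_isFilteredBy {p : Λ → Prop} {M : ModuleCat.{0} S}
    (hM : IsFilteredBy (fun mu : Subtype p => Q.L mu) M) (h : Q.HasFactor nu M) : p nu := by
  induction hM with
  | ofSubsingleton _ =>
    obtain ⟨u, hu⟩ := h
    exact absurd (Subsingleton.elim u 0) hu
  | @snoc _ _ mu _ _ hfg _ ih => exact (h.left_or_right hfg).elim ih fun hmu => hmu.eq ▸ mu.2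

variable (Q)

theorem isFilteredBy_L [IsArtinianRing S] (M : Type) [AddCommGroup M] [Module S M]
    [Module.Finite S M] :
    IsFilteredBy (fun mu : {mu // Q.HasFactor mu M} => Q.L mu) (ModuleCat.of S M) := by
  suffices h : ∀ p : Λ → Prop, (∀ mu, Q.HasFactor mu M → p mu) →
      IsFilteredBy (fun mu : Subtype p => Q.L mu) (ModuleCat.of S M) from h _ fun _ => id
  have hlen : IsFiniteLength S M := isFiniteLength_iff_isNoetherian_isArtinian.2
    ⟨inferInstance, inferInstance⟩
  induction hlen with
  | of_subsingleton => exact fun _ _ => .ofSubsingleton ‹_›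
  | @of_simple_quotient M _ _ N _ _ ih =>
    intro p hp
    obtain ⟨mu, ⟨e⟩⟩ := Q.fullL (ModuleCat.of S (M ⧸ N)) ‹_›
    have hmu : p mu := hp mu ((hasFactor_of_equiv e).of_surjective N.mkQ_surjective)
    exact .snoc (M := ModuleCat.of S M) (i := ⟨mu, hmu⟩) ((isShortExact_subtype_mkQ N).equiv_comp e)
      (ih p fun nu hnu => hp nu (hnu.of_injective N.injective_subtype))

theorem exists_ne_zero_to_L [Module.Finite S M] {u : M →ₗ[S] X} (hu : u ≠ 0) :
    ∃ mu, Q.HasFactor mu X ∧ ∃ v : M →ₗ[S] Q.L mu, v ≠ 0 := by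
  have : Nontrivial (LinearMap.range u) := Submodule.nontrivial_iff_ne_bot.2
    (mt LinearMap.range_eq_bot.1 hu)
  obtain ⟨N, hN, -⟩ := (eq_top_or_exists_le_coatom
    (⊥ : Submodule S (LinearMap.range u))).resolve_left bot_ne_top
  have : IsSimpleModule S (LinearMap.range u ⧸ N) := isSimpleModule_iff_isCoatom.2 hN
  obtain ⟨mu, ⟨e⟩⟩ := Q.fullL (ModuleCat.of S (LinearMap.range u ⧸ N)) this
  refine ⟨mu, ((hasFactor_of_equiv e).of_surjective N.mkQ_surjective).of_injective
    (Submodule.injective_subtype _), e.toLinearMap ∘ₗ N.mkQ ∘ₗ u.rangeRestrict, ?_⟩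
  exact LinearMap.ne_zero_of_surjective
    (e.surjective.comp (N.mkQ_surjective.comp u.surjective_rangeRestrict))

end Factors

section Standard

variable {M : Type} [AddCommGroup M] [Module S M] {lam mu : Λ}

theorem exists_universal_std (lam : Λ) : ∃ ρ : Q.P lam →ₗ[S] Q.std lam, Function.Surjective ρ ∧
    (∀ mu, Q.HasFactor mu (Q.std lam) → mu ≤ lam) ∧
    ∀ {M : Type} [AddCommGroup M] [Module S M] (f : Q.P lam →ₗ[S] M),
      (∀ mu, Q.HasFactor mu M → mu ≤ lam) → ∃ f' : Q.std lam →ₗ[S] M, f' ∘ₗ ρ = f := by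
  obtain ⟨K, ⟨e⟩, hle, hmin⟩ := Q.stdSpec lam
  refine ⟨e.symm.toLinearMap ∘ₗ K.mkQ, e.symm.surjective.comp K.mkQ_surjective,
    fun mu h => hle mu (hasFactor_iff_isCompFactor.1 (h.of_injective e.injective)), ?_⟩
  intro M _ _ f hM
  have hK : K ≤ LinearMap.ker f := hmin _ fun mu h => hM mu
    ((hasFactor_iff_isCompFactor.2 h).of_injective f.quotKerEquivRange.injective |>.of_injective
      (LinearMap.range f).injective_subtype)
  refine ⟨K.liftQ f hK ∘ₗ e.toLinearMap, LinearMap.ext fun x => ?_⟩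
  simp only [LinearMap.comp_apply, LinearEquiv.coe_coe, e.apply_symm_apply, Submodule.mkQ_apply,
    Submodule.liftQ_apply]

theorem exists_universal_costd (lam : Λ) :
    ∃ κ : Q.costd lam →ₗ[S] Q.I lam, Function.Injective κ ∧
      (∀ mu, Q.HasFactor mu (Q.costd lam) → mu ≤ lam) ∧
      ∀ V : Submodule S (Q.I lam), (∀ mu, Q.HasFactor mu V → mu ≤ lam) →
        V ≤ LinearMap.range κ := by
  obtain ⟨V, ⟨e⟩, hle, hmax⟩ := Q.costdSpec lam
  refine ⟨V.subtype ∘ₗ e.toLinearMap, V.injective_subtype.comp e.injective,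
    fun mu h => hle mu (hasFactor_iff_isCompFactor.1 (h.of_injective e.injective)), ?_⟩
  intro V' hV'
  rw [LinearEquiv.range_comp, V.range_subtype]
  exact hmax V' fun mu h => hV' mu (hasFactor_iff_isCompFactor.2 h)

variable {Q}

theorem HasFactor.le_of_std (h : Q.HasFactor mu (Q.std lam)) : mu ≤ lam :=
  have ⟨_, _, hle, _⟩ := Q.exists_universal_std lam
  hle mu h

theorem HasFactor.le_of_costd (h : Q.HasFactor mu (Q.costd lam)) : mu ≤ lam :=
  have ⟨_, _, hle, _⟩ := Q.exists_universal_costd lam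
  hle mu h

theorem exists_surjective_of_std {p : M →ₗ[S] Q.L lam} (hp : IsSuperfluousEpi p)
    (hM : ∀ mu, Q.HasFactor mu M → mu ≤ lam) :
    ∃ f : Q.std lam →ₗ[S] M, Function.Surjective f := by
  obtain ⟨π, hπ⟩ := Q.exists_isSuperfluousEpi lam
  obtain ⟨ρ, -, -, hρ⟩ := Q.exists_universal_std lam
  obtain ⟨g, rfl⟩ := Module.projective_lifting_property p π hp.surjective
  obtain ⟨f, rfl⟩ := hρ g hM
  exact ⟨f, .of_comp (g := ρ) (hp.surjective_of_comp (h := f ∘ₗ ρ) hπ.surjective)⟩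

theorem exists_injective_to_costd {j : Q.L lam →ₗ[S] M} (hj : IsEssentialMono j)
    (hM : ∀ mu, Q.HasFactor mu M → mu ≤ lam) :
    ∃ f : M →ₗ[S] Q.costd lam, Function.Injective f := by
  obtain ⟨ι, hι⟩ := Q.exists_isEssentialMono lam
  obtain ⟨κ, hκ, -, hmax⟩ := Q.exists_universal_costd lam
  obtain ⟨g, hg⟩ := Module.Injective.out j hj.injective ι
  have hg_inj : Function.Injective g := hj.injective_of_comp <|
    (LinearMap.ext hg : g ∘ₗ j = ι) ▸ hι.injective
  have hle : LinearMap.range g ≤ LinearMap.range κ := hmax _ fun mu h =>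
    hM mu (h.of_surjective g.surjective_rangeRestrict)
  obtain ⟨f, rfl⟩ := (isShortExact_mkQ_range hκ).exists_lift (u := g) <| LinearMap.ext fun x =>
    (Submodule.Quotient.mk_eq_zero _).2 (hle ⟨x, rfl⟩)
  exact ⟨f, .of_comp hg_inj⟩

variable (Q)

theorem exists_isShortExact_costd_I (lam : Λ) : ∃ (C : Type) (_ : AddCommGroup C) (_ : Module S C)
    (κ : Q.costd lam →ₗ[S] Q.I lam) (q : Q.I lam →ₗ[S] C), IsShortExact κ q ∧
    ∀ {M : Type} [AddCommGroup M] [Module S M], (∀ mu, Q.HasFactor mu M → mu ≤ lam) →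
      ∀ u : M →ₗ[S] C, u = 0 := by
  obtain ⟨κ, hκ, hle, hmax⟩ := Q.exists_universal_costd lam
  have hses := isShortExact_mkQ_range hκ
  refine ⟨_, _, _, κ, _, hses, fun {M} _ _ hM u => ?_⟩
  obtain ⟨f', g', hfg'⟩ := hses.exists_pullback (isShortExact_subtype_mkQ (LinearMap.range u))
  have hker := hmax _ fun mu h => (h.left_or_right hfg').elim (hle mu) fun h' =>
    hM mu (h'.of_surjective u.surjective_rangeRestrict)
  refine LinearMap.ext fun x => ?_
  obtain ⟨y, hy⟩ := hses.surjective (u x)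
  rw [← hy, LinearMap.zero_apply, ← LinearMap.mem_ker, Submodule.ker_mkQ]
  refine hker ?_
  rw [LinearMap.mem_ker, LinearMap.comp_apply, hy]
  exact (Submodule.Quotient.mk_eq_zero _).2 ⟨x, rfl⟩

theorem exists_isEssentialMono_costd (lam : Λ) :
    ∃ j : Q.L lam →ₗ[S] Q.costd lam, IsEssentialMono j := by
  obtain ⟨ι, hι⟩ := Q.exists_isEssentialMono lam
  obtain ⟨κ, hκ, -, hmax⟩ := Q.exists_universal_costd lam
  have hle : LinearMap.range ι ≤ LinearMap.range κ := hmax _ fun mu h =>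
    (h.of_surjective ι.surjective_rangeRestrict).eq.le
  obtain ⟨j, rfl⟩ := (isShortExact_mkQ_range hκ).exists_lift (u := ι) <| LinearMap.ext fun x =>
    (Submodule.Quotient.mk_eq_zero _).2 (hle ⟨x, rfl⟩)
  exact ⟨j, hι.of_comp hκ⟩

variable {Q}

theorem exists_section_of_ne_zero {M : ModuleCat.{0} S} {n : ℕ}
    {f : Fin (n + 1) → Submodule S M} (h0 : f 0 = ⊥) (htop : f (Fin.last n) = ⊤)
    (hsimple : ∀ i : Fin n, IsSimpleModule S (subquot S (f i.castSucc) (f i.succ)))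
    {u : Q.P mu →ₗ[S] M} (hu : u ≠ 0) :
    ∃ i : Fin n, Nonempty (subquot S (f i.castSucc) (f i.succ) ≃ₗ[S] Q.L mu) ∧
      LinearMap.range u ≤ f i.succ ∧ f i.succ ≤ f i.castSucc ⊔ LinearMap.range u := by
  obtain ⟨i, hle, hnle⟩ : ∃ i : Fin n, LinearMap.range u ≤ f i.succ ∧
      ¬LinearMap.range u ≤ f i.castSucc := by
    by_contra! hall
    have hle (j : Fin (n + 1)) : LinearMap.range u ≤ f j := by
      induction j using Fin.reverseInduction with
      | last => exact htop ▸ le_top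
      | cast i ih => exact hall i ih
    exact hu (LinearMap.range_eq_bot.1 (le_bot_iff.1 (h0 ▸ hle 0)))
  let w : Q.P mu →ₗ[S] subquot S (f i.castSucc) (f i.succ) :=
    Submodule.mkQ _ ∘ₗ u.codRestrict (f i.succ) fun x => hle ⟨x, rfl⟩
  have hw : w ≠ 0 := fun h => hnle <| by
    rintro _ ⟨x, rfl⟩
    exact (Submodule.Quotient.mk_eq_zero ((f i.castSucc).comap (f i.succ).subtype)).1
      (LinearMap.congr_fun h x)
  have := hsimple i
  refine ⟨i, HasFactor.nonempty_equiv ⟨w, hw⟩, hle, fun x hx => ?_⟩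
  obtain ⟨y, hy⟩ := w.surjective_of_ne_zero hw (Submodule.Quotient.mk ⟨x, hx⟩)
  have hmem : u y - x ∈ f i.castSucc :=
    (Submodule.Quotient.eq ((f i.castSucc).comap (f i.succ).subtype)).1 hy
  rw [← sub_sub_cancel (u y) x]
  exact sub_mem (le_sup_right (a := f i.castSucc) ⟨y, rfl⟩)
    (le_sup_left (b := LinearMap.range u) hmem)

theorem comp_ne_zero_of_compFactorMult_one {M : ModuleCat.{0} S}
    (hM : CompFactorMult S (Q.L mu) M 1) {ρ u : Q.P mu →ₗ[S] M} (hρ : Function.Surjective ρ)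
    {q : M →ₗ[S] Q.L mu} (hq : IsSuperfluousEpi q) (hu : u ≠ 0) : q ∘ₗ u ≠ 0 := by
  intro hqu
  obtain ⟨n, f, -, h0, htop, hsimple, hcard⟩ := hM
  have hρ0 : ρ ≠ 0 := fun h => hu <| LinearMap.ext fun x => by
    obtain ⟨y, hy⟩ := hρ (u x)
    rw [← hy, h, LinearMap.zero_apply, LinearMap.zero_apply]
  obtain ⟨i, hi, -, hiu⟩ := exists_section_of_ne_zero h0 htop hsimple hu
  obtain ⟨j, hj, hjρ, -⟩ := exists_section_of_ne_zero h0 htop hsimple hρ0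
  obtain rfl : j = i := congrArg Subtype.val
    ((Nat.card_eq_one_iff_unique.1 hcard).1.elim ⟨j, hj⟩ ⟨i, hi⟩)
  have hproper : f j.castSucc ≠ ⊤ := fun h =>
    Submodule.Quotient.nontrivial_iff.1 (IsSimpleModule.nontrivial S _) <|
      (congrArg (Submodule.comap (f j.succ).subtype) h).trans (Submodule.comap_top _)
  have hker : (⊤ : Submodule S M) ≤ LinearMap.ker q := calc
    ⊤ = LinearMap.range ρ := (LinearMap.range_eq_top.2 hρ).symm
    _ ≤ f j.castSucc ⊔ LinearMap.range u := hjρ.trans hiu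
    _ ≤ LinearMap.ker q := sup_le (hq.le_ker hproper) (LinearMap.range_le_ker_iff.2 hqu)
  exact LinearMap.ne_zero_of_surjective hq.surjective (LinearMap.ker_eq_top.1 (top_le_iff.1 hker))

variable (Q)

theorem exists_isSuperfluousEpi_std (lam : Λ) : ∃ q : Q.std lam →ₗ[S] Q.L lam,
    IsSuperfluousEpi q ∧ ∀ mu, Q.HasFactor mu (LinearMap.ker q) → mu < lam := by
  obtain ⟨π, hπ⟩ := Q.exists_isSuperfluousEpi lam
  obtain ⟨ρ, hρ, -, hfac⟩ := Q.exists_universal_std lam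
  obtain ⟨q, rfl⟩ := hfac π fun mu h => h.eq.le
  have hq : IsSuperfluousEpi q := hπ.of_comp hρ
  refine ⟨q, hq, fun mu h => ?_⟩
  refine lt_of_le_of_ne (h.of_injective (Submodule.injective_subtype _)).le_of_std ?_
  rintro rfl
  obtain ⟨u, hu⟩ := h
  refine comp_ne_zero_of_compFactorMult_one (Q.multOne mu) hρ hq
    (u := (LinearMap.ker q).subtype ∘ₗ u) (fun h => hu ?_) (LinearMap.ext fun x => (u x).2)
  exact (LinearMap.cancel_left (Submodule.injective_subtype _)).1
    (h.trans (LinearMap.comp_zero _).symm)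

end Standard

section ExtStdCostd

variable {M X : Type} [AddCommGroup M] [AddCommGroup X]
variable [Module S M] [Module S X] {lam mu : Λ}

theorem exists_isShortExact_P_std (lam : Λ) : ∃ (K : Submodule S (Q.P lam))
    (p : Q.P lam →ₗ[S] Q.std lam), IsShortExact K.subtype p ∧
      IsFilteredBy (fun mu : Set.Ioi lam => Q.std mu) (ModuleCat.of S K) := by
  obtain ⟨n, f, g, hfg, hle, hcard⟩ := Q.projFilt lam
  obtain ⟨π, hπ⟩ := Q.exists_isSuperfluousEpi lam
  have := hπ.surjective.nontrivial
  cases n with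
  | zero => exact absurd (hfg.2.1.symm.trans hfg.2.2.1) bot_ne_top
  | succ n =>
    obtain ⟨p, hp⟩ := hfg.isShortExact_last
    have hlast : lam = g (Fin.last n) := by
      obtain ⟨q, hq, -⟩ := Q.exists_isSuperfluousEpi_std (g (Fin.last n))
      exact HasFactor.eq
        ⟨q ∘ₗ p, LinearMap.ne_zero_of_surjective (hq.surjective.comp hp.surjective)⟩
    subst hlast
    have huniq (i : Fin (n + 1)) (hi : g i = g (Fin.last n)) : i = Fin.last n :=
      congrArg Subtype.val ((Nat.card_eq_one_iff_unique.1 hcard).1.elim ⟨i, hi⟩ ⟨Fin.last n, rfl⟩)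
    refine ⟨_, p, hp, isFilteredBy_of_chain hfg.1 hfg.2.1 _ fun i hi => ?_⟩
    have hne : g (Fin.last n) ≠ g i := fun h =>
      (Fin.castSucc_lt_castSucc_iff.1 hi).ne (huniq i h.symm)
    exact ⟨⟨g i, (hle i).lt_of_ne hne⟩, hfg.2.2.2 i⟩

variable {Q}

theorem extVanishes_std_zero (h : ¬Q.HasFactor lam X) : ExtVanishes S (Q.std lam) X 0 := by
  refine extVanishes_zero_iff.2 fun u => ?_
  by_contra hu
  obtain ⟨ρ, hρ, -⟩ := Q.exists_universal_std lam
  exact h ⟨u ∘ₗ ρ, fun h0 =>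
    hu ((LinearMap.cancel_right hρ).1 (h0.trans (LinearMap.zero_comp _).symm))⟩

theorem extVanishes_of_le (hM : ∀ nu, Q.HasFactor nu M → nu ≤ mu) :
    ExtVanishes S M (Q.costd mu) 1 := by
  obtain ⟨C, _, _, κ, q, hκq, hC⟩ := Q.exists_isShortExact_costd_I mu
  exact hκq.extVanishes_to_left (extVanishes_zero_iff.2 (hC hM)) (extVanishes_of_injective 0)

variable (Q)

theorem extVanishes_std_costd (lam mu : Λ) (i : ℕ) :
    ExtVanishes S (Q.std lam) (Q.costd mu) (i + 1) := by
  induction lam using WellFoundedGT.induction generalizing i with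
  | ind lam ih =>
    obtain ⟨K, p, hKp, hK⟩ := Q.exists_isShortExact_P_std lam
    cases i with
    | zero =>
      by_cases hle : lam ≤ mu
      · exact extVanishes_of_le fun nu h => h.le_of_std.trans hle
      · refine hKp.extVanishes_from_right
          (hK.extVanishes fun nu => extVanishes_std_zero fun h => ?_) (extVanishes_of_projective 0)
        exact hle (nu.2.le.trans h.le_of_costd)
    | succ i =>
      exact hKp.extVanishes_from_right (hK.extVanishes fun nu => ih nu nu.2 i)
        (extVanishes_of_projective _)

instance finite_P (lam : Λ) : Module.Finite S (Q.P lam) := by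
  obtain ⟨π, hπ⟩ := Q.exists_isSuperfluousEpi lam
  obtain ⟨y, hy⟩ := exists_ne (0 : Q.L lam)
  obtain ⟨x, rfl⟩ := hπ.surjective y
  have hspan : S ∙ x = ⊤ := by
    by_contra h
    exact hy (hπ.le_ker h (Submodule.mem_span_singleton_self x))
  exact ⟨⟨{x}, by rw [Finset.coe_singleton, hspan]⟩⟩

instance finite_std (lam : Λ) : Module.Finite S (Q.std lam) :=
  have ⟨ρ, hρ, _⟩ := Q.exists_universal_std lam
  .of_surjective ρ hρ

end ExtStdCostd
end QHData

/-! ### Standard filtration dimension and vanishing of Ext -/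

namespace QHData

variable {S Λ : Type} [Ring S] [Fintype Λ] [PartialOrder Λ] (Q : QHData S Λ)

theorem inStdFilt_eq : InStdFilt S Q = IsFilteredBy Q.std :=
  funext fun _ => propext isFilteredBy_iff.symm

theorem inCostdFilt_eq : InCostdFilt S Q = IsFilteredBy Q.costd :=
  funext fun _ => propext isFilteredBy_iff.symm

section FilteredByStd

variable {M X : Type} [AddCommGroup M] [AddCommGroup X] [Module S M] [Module S X] {lam mu : Λ}
variable {Q}

theorem extVanishes_zero_of_hasFactor_lt [Module.Finite S M]
    (hM : ∀ nu < lam, ∀ v : M →ₗ[S] Q.L nu, v = 0)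
    (hX : ∀ nu, Q.HasFactor nu X → nu < lam) : ExtVanishes S M X 0 := by
  refine extVanishes_zero_iff.2 fun u => ?_
  by_contra hu
  obtain ⟨nu, hnu, v, hv⟩ := Q.exists_ne_zero_to_L hu
  exact hv (hM nu (hX nu hnu) v)

theorem extVanishes_L_one [Module.Finite S M] (hM : ∀ nu < lam, ∀ v : M →ₗ[S] Q.L nu, v = 0)
    (hext : ExtVanishes S M (Q.costd mu) 1) (hmu : mu < lam) : ExtVanishes S M (Q.L mu) 1 := by
  obtain ⟨j, hj⟩ := Q.exists_isEssentialMono_costd mu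
  have hses := isShortExact_mkQ_range hj.injective
  refine hses.extVanishes_to_left (extVanishes_zero_of_hasFactor_lt hM fun nu h => ?_) hext
  exact (h.of_surjective hses.surjective).le_of_costd.trans_lt hmu

variable [IsArtinianRing S]

theorem exists_surjective_to_std [Module.Finite S M] [Nontrivial M]
    (hext : ∀ mu, ExtVanishes S M (Q.costd mu) 1) :
    ∃ (lam : Λ) (g : M →ₗ[S] Q.std lam), Function.Surjective g := by
  obtain ⟨mu, -, hmu⟩ := Q.exists_ne_zero_to_L (u := (LinearMap.id : M →ₗ[S] M))
    (LinearMap.ne_zero_of_surjective Function.surjective_id)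
  obtain ⟨lam, ⟨u, hu⟩, hmin⟩ := wellFounded_lt.has_min
    {mu : Λ | ∃ v : M →ₗ[S] Q.L mu, v ≠ 0} ⟨mu, hmu⟩
  have hM (nu : Λ) (hnu : nu < lam) (v : M →ₗ[S] Q.L nu) : v = 0 := by
    by_contra hv
    exact hmin nu ⟨v, hv⟩ hnu
  obtain ⟨q, hq, hlt⟩ := Q.exists_isSuperfluousEpi_std lam
  have hker : ExtVanishes S M (LinearMap.ker q) 1 :=
    (Q.isFilteredBy_L (LinearMap.ker q)).extVanishes_right fun nu =>
      extVanishes_L_one hM (hext nu) (hlt nu nu.2)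
  obtain ⟨g, rfl⟩ := (isShortExact_subtype_ker hq.surjective).exists_comp_eq_of_extVanishes hker u
  exact ⟨lam, g, hq.surjective_of_comp (LinearMap.surjective_of_ne_zero hu)⟩

theorem isFilteredBy_std_of_extVanishes [Module.Finite S M]
    (hext : ∀ mu, ExtVanishes S M (Q.costd mu) 1) : IsFilteredBy Q.std (ModuleCat.of S M) := by
  induction hlen : Module.length S M using WellFoundedLT.induction generalizing M with
  | ind _ ih =>
    cases subsingleton_or_nontrivial M with
    | inl hM => exact .ofSubsingleton hM
    | inr hM =>
      obtain ⟨lam, g, hg⟩ := exists_surjective_to_std hext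
      obtain ⟨q, hq, -⟩ := Q.exists_isSuperfluousEpi_std lam
      have := hq.surjective.nontrivial
      have hses := isShortExact_subtype_ker hg
      have hlt : Module.length S (LinearMap.ker g) < Module.length S M :=
        Submodule.length_lt fun h =>
          LinearMap.ne_zero_of_surjective hg (LinearMap.ker_eq_top.1 h)
      exact .snoc (M := ModuleCat.of S M) hses <| ih _ (hlen ▸ hlt) (fun mu =>
        hses.extVanishes_from_left (hext mu) (Q.extVanishes_std_costd lam mu 1)) rfl

end FilteredByStd

section StdDimension

variable {A B C M : Type} [AddCommGroup A] [AddCommGroup B] [AddCommGroup C] [AddCommGroup M]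
variable [Module S A] [Module S B] [Module S C] [Module S M] {n m : ℕ}

/-- `Extⁱ(M, ∇(μ)) = 0` for all `μ` and all `i > n`. For finitely generated `M` this
characterizes the modules of `Δ`-filtration dimension at most `n`; see `wfd_le_iff`. -/
def ExtCostdVanishesAbove (n : ℕ) (M : Type) [AddCommGroup M] [Module S M] : Prop :=
  ∀ i ≥ n, ∀ mu, ExtVanishes S M (Q.costd mu) (i + 1)

variable {Q}

theorem ExtCostdVanishesAbove.mono (h : Q.ExtCostdVanishesAbove n M) (hnm : n ≤ m) :
    Q.ExtCostdVanishesAbove m M :=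
  fun i hi => h i (hnm.trans hi)

theorem ExtCostdVanishesAbove.of_equiv (h : Q.ExtCostdVanishesAbove n A) (e : A ≃ₗ[S] B) :
    Q.ExtCostdVanishesAbove n B :=
  fun i hi mu => (h i hi mu).of_equiv_left e

theorem ExtCostdVanishesAbove.left {f : A →ₗ[S] B} {g : B →ₗ[S] C} (hfg : IsShortExact f g)
    (hB : Q.ExtCostdVanishesAbove n B) (hC : Q.ExtCostdVanishesAbove (n + 1) C) :
    Q.ExtCostdVanishesAbove n A :=
  fun i hi mu => hfg.extVanishes_from_left (hB i hi mu) (hC (i + 1) (Nat.succ_le_succ hi) mu)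

theorem ExtCostdVanishesAbove.right {f : A →ₗ[S] B} {g : B →ₗ[S] C} (hfg : IsShortExact f g)
    (hA : Q.ExtCostdVanishesAbove n A) (hB : Q.ExtCostdVanishesAbove (n + 1) B) :
    Q.ExtCostdVanishesAbove (n + 1) C := by
  rintro (_ | i) hi mu
  · exact absurd hi n.not_succ_le_zero
  · exact hfg.extVanishes_from_right (hA i (Nat.le_of_succ_le_succ hi) mu) (hB _ hi mu)

theorem extCostdVanishesAbove_of_isFilteredBy {ι : Type} {E : ι → ModuleCat.{0} S}
    {M : ModuleCat.{0} S} (h : IsFilteredBy E M) (hE : ∀ k, Q.ExtCostdVanishesAbove n (E k)) :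
    Q.ExtCostdVanishesAbove n M :=
  fun i hi mu => h.extVanishes fun k => hE k i hi mu

variable (Q)

theorem extCostdVanishesAbove_std (lam : Λ) : Q.ExtCostdVanishesAbove n (Q.std lam) :=
  fun i _ mu => Q.extVanishes_std_costd lam mu i

theorem extCostdVanishesAbove_of_projective [Module.Projective S M] :
    Q.ExtCostdVanishesAbove n M :=
  fun i _ _ => extVanishes_of_projective i

variable {Q}

theorem extCostdVanishesAbove_of_exactChain {A M : ModuleCat.{0} S}
    (h : ExactChain (IsFilteredBy Q.std) n A M) (hA : Q.ExtCostdVanishesAbove m A) :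
    Q.ExtCostdVanishesAbove (m + n) M := by
  induction h generalizing m with
  | ofEquiv e => exact hA.of_equiv e
  | cons hfg hX _ ih =>
    rw [← Nat.succ_add_eq_add_succ]
    exact ih (.right hfg hA (extCostdVanishesAbove_of_isFilteredBy hX Q.extCostdVanishesAbove_std))

variable (Q) [IsArtinianRing S]

theorem exists_extCostdVanishesAbove_L (lam : Λ) : ∃ n, Q.ExtCostdVanishesAbove n (Q.L lam) := by
  induction lam using WellFoundedLT.induction with
  | ind lam ih =>
    choose n hn using fun mu : Set.Iio lam => ih mu mu.2
    obtain ⟨b, hb⟩ := (Set.finite_range n).bddAbove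
    obtain ⟨q, hq, hlt⟩ := Q.exists_isSuperfluousEpi_std lam
    refine ⟨b + 1, .right (isShortExact_subtype_ker hq.surjective) ?_
      (Q.extCostdVanishesAbove_std lam)⟩
    exact extCostdVanishesAbove_of_isFilteredBy (Q.isFilteredBy_L (LinearMap.ker q)) fun mu =>
      (hn ⟨mu, hlt mu mu.2⟩).mono (hb ⟨_, rfl⟩)

theorem exists_extCostdVanishesAbove : ∃ n, ∀ (M : Type) [AddCommGroup M] [Module S M]
    [Module.Finite S M], Q.ExtCostdVanishesAbove n M := by
  choose n hn using Q.exists_extCostdVanishesAbove_L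
  obtain ⟨b, hb⟩ := (Set.finite_range n).bddAbove
  exact ⟨b, fun M _ _ _ => extCostdVanishesAbove_of_isFilteredBy (Q.isFilteredBy_L M) fun mu =>
    (hn mu).mono (hb ⟨_, rfl⟩)⟩

variable {Q}

theorem exists_exactChain_of_extCostdVanishesAbove [Module.Finite S M]
    (h : Q.ExtCostdVanishesAbove n M) : ∃ A, IsFilteredBy Q.std A ∧
      ExactChain (IsFilteredBy Q.std) n A (ModuleCat.of S M) := by
  induction n generalizing M with
  | zero => exact ⟨_, isFilteredBy_std_of_extVanishes (h 0 le_rfl), .ofEquiv (.refl S M)⟩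
  | succ n ih =>
    obtain ⟨m, g, hg⟩ := Module.Finite.exists_fin' S M
    have hses := isShortExact_subtype_ker hg
    obtain ⟨A, hA, hchain⟩ := ih (.left hses Q.extCostdVanishesAbove_of_projective h)
    exact ⟨A, hA, hchain.snoc (X := ModuleCat.of S (Fin m → S)) hses
      (isFilteredBy_std_of_extVanishes fun _ => extVanishes_of_projective 0)⟩

theorem wfdLE_iff {M : ModuleCat.{0} S} [Module.Finite S M] :
    WfdLE S Q M n ↔ Q.ExtCostdVanishesAbove n M := by
  rw [WfdLE, inStdFilt_eq, exists_isExactSeq_left_iff]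
  refine ⟨fun ⟨A, hA, h⟩ => ?_, exists_exactChain_of_extCostdVanishesAbove⟩
  have hA₀ : Q.ExtCostdVanishesAbove 0 A :=
    extCostdVanishesAbove_of_isFilteredBy hA Q.extCostdVanishesAbove_std
  exact n.zero_add ▸ extCostdVanishesAbove_of_exactChain h hA₀

theorem wfd_le_iff {M : ModuleCat.{0} S} [Module.Finite S M] :
    wfd S Q M ≤ n ↔ Q.ExtCostdVanishesAbove n M := by
  obtain ⟨b, hb⟩ := Q.exists_extCostdVanishesAbove
  have hmem : WfdLE S Q M (wfd S Q M) :=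
    Nat.sInf_mem (s := {d | WfdLE S Q M d}) ⟨b, wfdLE_iff.2 (hb M)⟩
  exact ⟨(wfdLE_iff.1 hmem).mono, fun h => Nat.sInf_le (wfdLE_iff.2 h)⟩

end StdDimension
end QHData

/-! ### Simple-preserving dualities -/

namespace Duality

variable {S Λ : Type} [Ring S] [Fintype Λ] [PartialOrder Λ] {Q : QHData S Λ} (dual : Duality S Q)
variable {A B C M : ModuleCat.{0} S}

instance finite_D [Module.Finite S M] : Module.Finite S (dual.D M) := dual.finD M ‹_›

theorem Dmap_zero [Module.Finite S A] [Module.Finite S B] : dual.Dmap (0 : A →ₗ[S] B) = 0 :=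
  left_eq_add.1 ((congrArg dual.Dmap (add_zero 0)).symm.trans (dual.Dadd ‹_› ‹_› 0 0))

theorem Dmap_eq_zero_iff [Module.Finite S A] [Module.Finite S B] {u : A →ₗ[S] B} :
    dual.Dmap u = 0 ↔ u = 0 :=
  ⟨fun h => (dual.Dfull ‹_› ‹_›).1 (h.trans dual.Dmap_zero.symm), fun h => h ▸ dual.Dmap_zero⟩

theorem exists_Dmap_eq [Module.Finite S A] [Module.Finite S B] (u : dual.D B →ₗ[S] dual.D A) :
    ∃ v : A →ₗ[S] B, dual.Dmap v = u :=
  (dual.Dfull ‹_› ‹_›).2 u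

theorem nonempty_D_equiv [Module.Finite S A] (e : A ≃ₗ[S] B) :
    Nonempty (dual.D A ≃ₗ[S] dual.D B) := by
  have hA : Module.Finite S A := ‹_›
  have hB : Module.Finite S B := .equiv e
  refine ⟨.ofLinearMap (dual.Dmap e.symm.toLinearMap) (dual.Dmap e.toLinearMap) ?_ ?_⟩
  · rw [← dual.Dcomp hB hA hB, e.comp_symm, dual.Did B hB]
  · rw [← dual.Dcomp hA hB hA, e.symm_comp, dual.Did A hA]

theorem subsingleton_D [Subsingleton M] : Subsingleton (dual.D M) := by
  have hid : (LinearMap.id : dual.D M →ₗ[S] dual.D M) = 0 := by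
    rw [← dual.Did M inferInstance, dual.Dmap_eq_zero_iff]
    exact Subsingleton.elim _ _
  exact subsingleton_of_forall_eq 0 fun x => LinearMap.congr_fun hid x

variable [IsArtinianRing S]

section Exactness

theorem isShortExact_Dmap [Module.Finite S B] {f : A →ₗ[S] B} {g : B →ₗ[S] C}
    (h : IsShortExact f g) : IsShortExact (dual.Dmap g) (dual.Dmap f) :=
  have ⟨hinj, hsurj, hexact⟩ := dual.Dexact h.finite_left ‹_› h.finite_right f g h.injective
    h.surjective h.exact.linearMap_ker_eq.symm
  ⟨hinj, hsurj, LinearMap.exact_iff.2 hexact.symm⟩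

theorem injective_Dmap_iff [Module.Finite S A] [Module.Finite S B] {u : A →ₗ[S] B} :
    Function.Injective (dual.Dmap u) ↔ Function.Surjective u := by
  refine ⟨fun hu => ?_, fun hu => (dual.isShortExact_Dmap (A := ModuleCat.of S (LinearMap.ker u))
    (isShortExact_subtype_ker hu)).injective⟩
  let v : B →ₗ[S] ModuleCat.of S (B ⧸ LinearMap.range u) := Submodule.mkQ _
  have hv : dual.Dmap u ∘ₗ dual.Dmap v = 0 := by
    rw [← dual.Dcomp ‹_› ‹_› inferInstance, dual.Dmap_eq_zero_iff]
    exact LinearMap.range_mkQ_comp u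
  have hv0 : v = 0 := dual.Dmap_eq_zero_iff.1 <|
    (LinearMap.cancel_left hu).1 (hv.trans (LinearMap.comp_zero _).symm)
  rw [← LinearMap.range_eq_top, ← Submodule.ker_mkQ (LinearMap.range u)]
  exact LinearMap.ker_eq_top.2 hv0

theorem surjective_Dmap_iff [Module.Finite S A] [Module.Finite S B] {u : A →ₗ[S] B} :
    Function.Surjective (dual.Dmap u) ↔ Function.Injective u := by
  refine ⟨fun hu => ?_, fun hu => (dual.isShortExact_Dmap
    (C := ModuleCat.of S (B ⧸ LinearMap.range u)) (isShortExact_mkQ_range hu)).surjective⟩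
  let v : ModuleCat.of S (LinearMap.ker u) →ₗ[S] A := Submodule.subtype _
  have hv : dual.Dmap v ∘ₗ dual.Dmap u = 0 := by
    rw [← dual.Dcomp inferInstance ‹_› ‹_›, dual.Dmap_eq_zero_iff]
    exact LinearMap.comp_ker_subtype u
  have hv0 : v = 0 := dual.Dmap_eq_zero_iff.1 <|
    (LinearMap.cancel_right hu).1 (hv.trans (LinearMap.zero_comp _).symm)
  rw [← LinearMap.ker_eq_bot, ← Submodule.range_subtype (LinearMap.ker u)]
  exact LinearMap.range_eq_bot.2 hv0

theorem isEssentialMono_Dmap [Module.Finite S A] [Module.Finite S B] {p : A →ₗ[S] B}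
    (hp : IsSuperfluousEpi p) : IsEssentialMono (dual.Dmap p) := by
  refine isEssentialMono_of_forall (dual.injective_Dmap_iff.2 hp.surjective)
    fun {C} _ _ _ f hf => ?_
  obtain ⟨e⟩ := dual.Dinvol (ModuleCat.of S C) ‹_›
  obtain ⟨h, hh⟩ := dual.exists_Dmap_eq (e.symm.toLinearMap ∘ₗ f)
  have hinj : Function.Injective (dual.Dmap (p ∘ₗ h)) := by
    rw [dual.Dcomp inferInstance ‹_› ‹_›, hh]
    exact e.symm.injective.comp hf
  have hsurj := hp.surjective_of_comp (dual.injective_Dmap_iff.1 hinj)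
  exact .of_comp (hh ▸ dual.injective_Dmap_iff.2 hsurj)

theorem isSuperfluousEpi_Dmap [Module.Finite S A] [Module.Finite S B] {j : A →ₗ[S] B}
    (hj : IsEssentialMono j) : IsSuperfluousEpi (dual.Dmap j) := by
  refine isSuperfluousEpi_of_forall (dual.surjective_Dmap_iff.2 hj.injective)
    fun {C} _ _ _ f hf => ?_
  obtain ⟨e⟩ := dual.Dinvol (ModuleCat.of S C) ‹_›
  obtain ⟨h, hh⟩ := dual.exists_Dmap_eq (f ∘ₗ e.toLinearMap)
  have hsurj : Function.Surjective (dual.Dmap (h ∘ₗ j)) := by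
    rw [dual.Dcomp ‹_› ‹_› inferInstance, hh]
    exact hf.comp e.surjective
  have hinj := hj.injective_of_comp (dual.surjective_Dmap_iff.1 hsurj)
  exact .of_comp (hh ▸ dual.surjective_Dmap_iff.2 hinj)

theorem injective_D_of_projective [Module.Finite S M] [Module.Projective S M] :
    Module.Injective S (dual.D M) := by
  refine Module.Baer.injective fun J g => ?_
  let ι : ModuleCat.of S J →ₗ[S] ModuleCat.of S S := J.subtype
  obtain ⟨e⟩ := dual.Dinvol M ‹_›
  have : Module.Projective S (dual.D (dual.D M)) := .of_equiv e.symm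
  obtain ⟨w, hw⟩ := Module.projective_lifting_property (dual.Dmap ι)
    (dual.Dmap (A := ModuleCat.of S J) g) (dual.surjective_Dmap_iff.2 J.injective_subtype)
  obtain ⟨g', rfl⟩ := dual.exists_Dmap_eq w
  rw [← dual.Dcomp inferInstance inferInstance inferInstance] at hw
  have hext : g' ∘ₗ ι = g := (dual.Dfull inferInstance inferInstance).1 hw
  exact ⟨g', fun x hx => LinearMap.congr_fun hext ⟨x, hx⟩⟩

end Exactness

section Costandard

include dual in
theorem finite_I (lam : Λ) : Module.Finite S (Q.I lam) := by
  obtain ⟨π, hπ⟩ := Q.exists_isSuperfluousEpi lam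
  obtain ⟨ι, hι⟩ := Q.exists_isEssentialMono lam
  obtain ⟨e⟩ := dual.DL lam
  have := dual.injective_D_of_projective (M := Q.P lam)
  obtain ⟨h, hh⟩ := Module.Injective.out ι hι.injective (dual.Dmap π ∘ₗ e.symm.toLinearMap)
  refine .of_injective h (hι.injective_of_comp ?_)
  rw [LinearMap.ext hh (f := h ∘ₗ ι)]
  exact (dual.injective_Dmap_iff.2 hπ.surjective).comp e.symm.injective

include dual in
theorem finite_costd (lam : Λ) : Module.Finite S (Q.costd lam) :=
  have := dual.finite_I lam
  have ⟨_, _, _, _, _, h, _⟩ := Q.exists_isShortExact_costd_I lam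
  h.finite_left

theorem isFilteredBy_D {ι : Type} {E F : ι → ModuleCat.{0} S} [∀ i, Module.Finite S (E i)]
    (hEF : ∀ i, Nonempty (dual.D (E i) ≃ₗ[S] F i)) (h : IsFilteredBy E M) :
    IsFilteredBy F (dual.D M) := by
  induction h with
  | ofSubsingleton _ => exact .ofSubsingleton dual.subsingleton_D
  | @snoc _ _ i _ _ hfg hA ih =>
    have := hA.finite
    have := hfg.finite_middle
    exact .extension (dual.isShortExact_Dmap hfg) (.single (hEF i).some) ih

theorem hasFactor_of_hasFactor_D [Module.Finite S M] {mu : Λ} (h : Q.HasFactor mu (dual.D M)) :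
    Q.HasFactor mu M := by
  have hD : IsFilteredBy (fun nu : {nu // Q.HasFactor nu M} => Q.L nu) (dual.D M) :=
    dual.isFilteredBy_D (fun nu => dual.DL nu) (Q.isFilteredBy_L M)
  exact h.mem_of_isFilteredBy (p := (Q.HasFactor · M)) hD

theorem nonempty_D_std_equiv (lam : Λ) : Nonempty (dual.D (Q.std lam) ≃ₗ[S] Q.costd lam) := by
  have := dual.finite_costd lam
  obtain ⟨q, hq, -⟩ := Q.exists_isSuperfluousEpi_std lam
  obtain ⟨j, hj⟩ := Q.exists_isEssentialMono_costd lam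
  obtain ⟨eL⟩ := dual.DL lam
  obtain ⟨a, ha⟩ := QHData.exists_injective_to_costd
    ((dual.isEssentialMono_Dmap hq).comp_equiv eL.symm)
    fun _ h => (dual.hasFactor_of_hasFactor_D h).le_of_std
  obtain ⟨t, ht⟩ := QHData.exists_surjective_of_std
    ((dual.isSuperfluousEpi_Dmap hj).equiv_comp eL)
    fun _ h => (dual.hasFactor_of_hasFactor_D h).le_of_costd
  obtain ⟨e⟩ := dual.Dinvol (Q.costd lam) ‹_›
  have hb : Function.Injective (dual.Dmap t ∘ₗ e.symm.toLinearMap) :=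
    (dual.injective_Dmap_iff.2 ht).comp e.symm.injective
  exact ⟨.ofBijective a ⟨ha, .of_comp (IsArtinian.surjective_of_injective_endomorphism
    (a ∘ₗ dual.Dmap t ∘ₗ e.symm.toLinearMap) (ha.comp hb))⟩⟩

theorem nonempty_D_costd_equiv (lam : Λ) : Nonempty (dual.D (Q.costd lam) ≃ₗ[S] Q.std lam) := by
  obtain ⟨e⟩ := dual.nonempty_D_std_equiv lam
  obtain ⟨e'⟩ := dual.nonempty_D_equiv e
  obtain ⟨e''⟩ := dual.Dinvol (Q.std lam) inferInstance
  exact ⟨e'.symm.trans e''⟩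

end Costandard

section Dimensions

variable {n : ℕ}

theorem exactChain_D {𝒞 𝒟 : ModuleCat.{0} S → Prop} (hfin : ∀ X, 𝒞 X → Module.Finite S X)
    (hD : ∀ X, 𝒞 X → 𝒟 (dual.D X)) [hA : Module.Finite S A] (h : ExactChain 𝒞 n A M) :
    ExactChain 𝒟 n (dual.D M) (dual.D A) := by
  induction h generalizing hA with
  | ofEquiv e => exact .ofEquiv (dual.nonempty_D_equiv e).some.symm
  | cons hfg hX _ ih =>
    have := hfin _ hX
    have := hfg.finite_right
    exact ih.snoc (dual.isShortExact_Dmap hfg) (hD _ hX)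

theorem gfdLE_iff [Module.Finite S M] : GfdLE S Q M n ↔ WfdLE S Q (dual.D M) n := by
  have := dual.finite_costd
  rw [GfdLE, WfdLE, Q.inStdFilt_eq, Q.inCostdFilt_eq, exists_isExactSeq_left_iff,
    exists_isExactSeq_right_iff]
  constructor
  · rintro ⟨X, hX, h⟩
    exact ⟨_, dual.isFilteredBy_D dual.nonempty_D_costd_equiv hX, dual.exactChain_D
      (fun _ => IsFilteredBy.finite) (fun _ => dual.isFilteredBy_D dual.nonempty_D_costd_equiv) h⟩
  · rintro ⟨X, hX, h⟩
    have := hX.finite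
    exact ⟨_, dual.isFilteredBy_D dual.nonempty_D_std_equiv hX, (dual.exactChain_D
      (fun _ => IsFilteredBy.finite)
      (fun _ => dual.isFilteredBy_D dual.nonempty_D_std_equiv) h).comp_equiv
      (dual.Dinvol M ‹_›).some.symm⟩

theorem gfd_eq_wfd_D [Module.Finite S M] : gfd S Q M = wfd S Q (dual.D M) :=
  congrArg sInf (Set.ext fun _ => dual.gfdLE_iff)

theorem gfd_le_iff [Module.Finite S M] :
    gfd S Q M ≤ n ↔ Q.ExtCostdVanishesAbove n (dual.D M) := by
  rw [dual.gfd_eq_wfd_D, QHData.wfd_le_iff]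

include dual in
theorem gfd_L (lam : Λ) : gfd S Q (Q.L lam) = wfd S Q (Q.L lam) := by
  obtain ⟨e⟩ := dual.DL lam
  refine eq_of_forall_ge_iff fun n => ?_
  rw [dual.gfd_le_iff, QHData.wfd_le_iff]
  exact ⟨fun h => h.of_equiv e, fun h => h.of_equiv e.symm⟩

end Dimensions
end Duality

/-! ### Injective dimension of costandard modules -/

section InjectiveDimension

variable {S : Type} [Ring S] {n : ℕ} {Y : ModuleCat.{0} S}

theorem exists_exactChain_injective
    (h : ∀ J : Submodule S S, ExtVanishes S (S ⧸ J) Y (n + 1)) :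
    ∃ M : ModuleCat.{0} S, Module.Injective S M ∧
      ExactChain (fun X => Module.Injective S X) n Y M := by
  induction n generalizing Y with
  | zero =>
    refine ⟨Y, Module.Baer.injective fun J g => ?_, .ofEquiv (.refl S Y)⟩
    obtain ⟨v, hv⟩ := (isShortExact_subtype_mkQ J).exists_extension_of_extVanishes (h J) g
    exact ⟨v, fun x hx => LinearMap.congr_fun hv ⟨x, hx⟩⟩
  | succ n ih =>
    obtain ⟨⟨J, _, f, hf⟩⟩ := EnoughInjectives.presentation Y
    have hJ : Module.Injective S J := Module.injective_module_of_injective_object S J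
    have hses := isShortExact_mkQ_range ((ModuleCat.mono_iff_injective f).1 hf)
    obtain ⟨M, hM, hchain⟩ := ih (Y := ModuleCat.of S (J ⧸ LinearMap.range f.hom)) fun I =>
      hses.extVanishes_to_right (extVanishes_of_injective n) (h I)
    exact ⟨M, hM, .cons hses hJ hchain⟩

theorem injdim_le_of_extVanishes (h : ∀ J : Submodule S S, ExtVanishes S (S ⧸ J) Y (n + 1)) :
    injdim S Y ≤ n :=
  Nat.sInf_le (exists_isExactSeq_right_iff.2 (exists_exactChain_injective h))

end InjectiveDimension

namespace Duality

variable {S Λ : Type} [Ring S] [IsArtinianRing S] [Fintype Λ] [PartialOrder Λ] {Q : QHData S Λ}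
variable (dual : Duality S Q)

include dual

theorem extCostdVanishesAbove_wfd_L (hA : PropA S Q) {M : Type} [AddCommGroup M] [Module S M]
    [Module.Finite S M] {lam : Λ} (hM : ∀ mu, Q.HasFactor mu M → mu ≤ lam) :
    Q.ExtCostdVanishesAbove (wfd S Q (Q.L lam)) M := by
  refine QHData.extCostdVanishesAbove_of_isFilteredBy (Q.isFilteredBy_L M) fun ⟨mu, hmu⟩ => ?_
  rw [← QHData.wfd_le_iff, ← dual.gfd_L, ← dual.gfd_L]
  rcases (hM mu hmu).eq_or_lt with rfl | hlt
  · exact le_rfl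
  · exact hA mu lam hlt

theorem propD (hA : PropA S Q) : PropD S Q := by
  intro lam
  have := dual.finite_costd lam
  refine le_antisymm (QHData.wfd_le_iff.2 <|
    dual.extCostdVanishesAbove_wfd_L hA fun mu h => h.le_of_costd) ?_
  by_contra! hlt
  obtain ⟨b, hb⟩ := Nat.exists_eq_succ_of_ne_zero hlt.ne_bot
  obtain ⟨j, hj⟩ := Q.exists_isEssentialMono_costd lam
  have hses := isShortExact_mkQ_range hj.injective
  have hcokernel := dual.extCostdVanishesAbove_wfd_L hA
    (M := Q.costd lam ⧸ LinearMap.range j) (lam := lam)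
    fun mu h => (h.of_surjective hses.surjective).le_of_costd
  have hcostd : Q.ExtCostdVanishesAbove b (Q.costd lam) := QHData.wfd_le_iff.1 (by omega)
  have hL : wfd S Q (Q.L lam) ≤ b := QHData.wfd_le_iff.2 (.left hses hcostd (hcokernel.mono hb.le))
  omega

theorem extCostdVanishesAbove_gfdAlg (M : ModuleCat.{0} S) [Module.Finite S M] :
    Q.ExtCostdVanishesAbove (gfdAlg S Q) M := by
  obtain ⟨b, hb⟩ := Q.exists_extCostdVanishesAbove
  have hbdd : BddAbove {d | ∃ N : ModuleCat.{0} S, Module.Finite S N ∧ gfd S Q N = d} := by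
    refine ⟨b, ?_⟩
    rintro _ ⟨N, _, rfl⟩
    exact dual.gfd_le_iff.2 (hb (dual.D N))
  have hle : gfd S Q (dual.D M) ≤ gfdAlg S Q := le_csSup hbdd ⟨_, inferInstance, rfl⟩
  obtain ⟨e⟩ := dual.Dinvol M ‹_›
  exact (dual.gfd_le_iff.1 hle).of_equiv e

theorem injdim_costd_le_gfdAlg (lam : Λ) : injdim S (Q.costd lam) ≤ gfdAlg S Q :=
  injdim_le_of_extVanishes fun J =>
    dual.extCostdVanishesAbove_gfdAlg (ModuleCat.of S (S ⧸ J)) _ le_rfl lam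

end Duality

end QHPaper

open QHPaper in
theorem stmt16_general (S Λ : Type) [Ring S] [IsArtinianRing S] [Fintype Λ] [PartialOrder Λ]
    (QH : QHData S Λ) (dual : Duality S QH) (hA : PropA S QH) (hC : PropC S QH) :
    PropE S QH := by
  intro mu lam hlt
  have hgfd : wfd S QH (QH.L mu) ≤ wfd S QH (QH.L lam) := by
    simpa only [dual.gfd_L] using hA mu lam hlt
  have hmu := (dual.propD hA mu).symm.trans (hC mu)
  have hlam := (dual.propD hA lam).symm.trans (hC lam)
  have hmu_le := dual.injdim_costd_le_gfdAlg mu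
  have hlam_le := dual.injdim_costd_le_gfdAlg lam
  omega

open QHPaper in
/-- Let `S` be a connected quasi-hereditary algebra with a simple-preserving
duality whose partial order is minimal for the quasi-hereditary structure. If `S` satisfies
property A and property C, then `S` satisfies property E. -/
theorem stmt16 (k S Λ : Type) [Field k] [Ring S] [Algebra k S] [FiniteDimensional k S]
    [Fintype Λ] [PartialOrder Λ]
    (hconn : ConnectedRing S)
    (QH : QHData S Λ) (dual : Duality S QH) (hmin : MinimalOrder S QH)
    (hA : PropA S QH) (hC : PropC S QH) :
    PropE S QH := by
  have : IsArtinianRing S := .of_finite k S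
  exact stmt16_general S Λ QH dual hA hC
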